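/- For all integers k ≥ 1, s ≥ 0, r ≥ 0 with s odd, r even and s + r < k, GR_k((k−s−r)P3, sK3, rH3) = 4·5^((s−1)/2)·17^(r/2) + 1. -/

import Mathlib

/-!
Let forbidding `P₃`, `K₄` minus an edge and `K₅` minus an edge be the levels 1, 2 and 3 of a colour;
a triangle-free colour may be given level 2. By Gallai's theorem a Gallai colouring either splits
into two sets joined completely in one colour, or is a blow-up of a two-coloured complete graph both
of whose colours are connected. For the upper bound, induct on the vertex set for all assignments of
levels to the colours simultaneously: passing to a part, or to the neighbourhood of a part, lowers
the level of the joining colour. If this cannot be done, the quotient is a two-colouring without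
certain small books in which only few vertices have been blown up, and small Ramsey numbers such as
`R(K₃, K₅ - e) ≤ 11` and `R(K₄) ≤ 18` give the bound.

For the lower bound, colour a 4-cycle with one colour and its complement, a matching, with another,
and blow up repeatedly, with two new colours at each step, by the self-complementary Paley graphs of
order 5, which is triangle-free, and of order 17, which is `K₄`-free.
-/

open SimpleGraph

/-- A rainbow triangle in an edge-coloring of a complete graph: three distinct
vertices whose three pairwise edges receive three pairwise distinct colors. -/
def HasRainbowTriangle {n k : ℕ} (c : Fin n → Fin n → Fin k) : Prop :=
  ∃ u v w : Fin n, u ≠ v ∧ u ≠ w ∧ v ≠ w ∧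
    c u v ≠ c u w ∧ c u v ≠ c v w ∧ c u w ≠ c v w

/-- A Gallai `k`-coloring of `K_n`: a symmetric edge-coloring with no rainbow triangle. -/
def IsGallaiColoring {n k : ℕ} (c : Fin n → Fin n → Fin k) : Prop :=
  (∀ u v, c u v = c v u) ∧ ¬ HasRainbowTriangle c

/-- A monochromatic copy of the graph `F` in color `i`: an injection of the vertices
of `F` into the vertices of `K_n` mapping every edge of `F` to an edge colored `i`. -/
def HasMonoCopy {V : Type} (F : SimpleGraph V) {n k : ℕ}
    (c : Fin n → Fin n → Fin k) (i : Fin k) : Prop :=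
  ∃ f : V → Fin n, Function.Injective f ∧ ∀ a b, F.Adj a b → c (f a) (f b) = i

/-- The Gallai-Ramsey number `GR(F₁, …, F_k)`: the least `n` such that every Gallai
`k`-coloring of `K_n` contains, for some color `i`, a monochromatic copy of `Fᵢ`
in color `i`. -/
noncomputable def GR (k : ℕ) (F : Fin k → Σ V : Type, SimpleGraph V) : ℕ :=
  sInf {n : ℕ | ∀ c : Fin n → Fin n → Fin k, IsGallaiColoring c →
    ∃ i : Fin k, HasMonoCopy (F i).2 c i}

/-- The triangle `K₃`. -/
def GK3 : SimpleGraph (Fin 3) := ⊤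

/-- The path `P₃` on three vertices (edges 0–1 and 1–2). -/
def GP3 : SimpleGraph (Fin 3) := SimpleGraph.fromRel (fun a _ => a = 1)

/-- `H₁`: a `K₄` on `{0,1,2,3}` together with the extra vertex `4` adjacent to
exactly the vertex `3`. -/
def GH1 : SimpleGraph (Fin 5) :=
  SimpleGraph.fromRel (fun a b => (a ≠ 4 ∧ b ≠ 4) ∨ (a = 3 ∧ b = 4))

/-- `H₂`: `K₅` minus the two edges 0–1 and 1–2 of a path on three vertices. -/
def GH2 : SimpleGraph (Fin 5) :=
  (⊤ : SimpleGraph (Fin 5)) \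
    SimpleGraph.fromRel (fun a b => (a = 0 ∧ b = 1) ∨ (a = 1 ∧ b = 2))

/-- `H₃`: `K₅` minus the edge 0–1. -/
def GH3 : SimpleGraph (Fin 5) :=
  (⊤ : SimpleGraph (Fin 5)) \ SimpleGraph.fromRel (fun a b => a = 0 ∧ b = 1)
/-- The family of graphs for `GR_k((k-s-r)P₃, sK₃, rH₃)`: the graph `H₃` in each of
the first `r` colors, the triangle `K₃` in each of the next `s` colors, and the path
`P₃` in each of the remaining `k - s - r` colors. -/
def mixPKH (k s r : ℕ) : Fin k → Σ V : Type, SimpleGraph V :=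
  fun i =>
    if (i : ℕ) < r then ⟨Fin 5, GH3⟩
    else if (i : ℕ) < r + s then ⟨Fin 3, GK3⟩
    else ⟨Fin 3, GP3⟩

section

open scoped Classical

section BookFree

variable {V : Type*} {G H : SimpleGraph V} {S T P : Finset V} {v w : V} {m t : ℕ}

/-- The neighbours of `v` in `G` that lie in the finite set `S`. -/
noncomputable def nbrsIn (G : SimpleGraph V) (S : Finset V) (v : V) : Finset V :=
  S.filter (G.Adj v)

/-- No `m`-clique of `G` inside `S` has more than `t` common neighbours in `S`. For `t = 0` this
says that `S` contains no `K_{m+1}`, and for `t = 1` that it contains no `K_{m+2}` minus an edge;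
so `P₃`, `K₃` and `H₃` are excluded by `(m, t) = (1, 1)`, `(2, 0)` and `(3, 1)`. -/
def BookFreeOn (G : SimpleGraph V) (m t : ℕ) (S : Finset V) : Prop :=
  ∀ Q ⊆ S, G.IsNClique m Q → (S.filter fun x => ∀ q ∈ Q, G.Adj q x).card ≤ t

@[simp]
theorem mem_nbrsIn : w ∈ nbrsIn G S v ↔ w ∈ S ∧ G.Adj v w :=
  Finset.mem_filter

theorem nbrsIn_subset : nbrsIn G S v ⊆ S :=
  Finset.filter_subset _ _

theorem notMem_nbrsIn_self : v ∉ nbrsIn G S v := by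
  simp

theorem nbrsIn_mono (h : S ⊆ T) : nbrsIn G S v ⊆ nbrsIn G T v :=
  Finset.filter_subset_filter _ h

theorem card_nbrsIn_add_card_nbrsIn_compl (hv : v ∉ S) :
    (nbrsIn G S v).card + (nbrsIn Gᶜ S v).card = S.card := by
  have hcompl : nbrsIn Gᶜ S v = S.filter fun x => ¬ G.Adj v x := by
    ext x
    have hne (hx : x ∈ S) : v ≠ x := fun h => hv (h ▸ hx)
    simp +contextual [hne]
  rw [hcompl]
  exact Finset.card_filter_add_card_filter_not (G.Adj v)

theorem card_eq_nbrsIn_add_nbrsIn_compl (hv : v ∈ S) :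
    S.card = (nbrsIn G S v).card + (nbrsIn Gᶜ S v).card + 1 := by
  have hG (H : SimpleGraph V) : nbrsIn H (S.erase v) v = nbrsIn H S v := by
    ext x
    simp only [mem_nbrsIn, Finset.mem_erase]
    exact ⟨fun h => ⟨h.1.2, h.2⟩, fun h => ⟨⟨h.2.ne', h.1⟩, h.2⟩⟩
  rw [← hG G, ← hG Gᶜ, card_nbrsIn_add_card_nbrsIn_compl (Finset.notMem_erase v S),
    Finset.card_erase_add_one hv]

theorem sum_card_nbrsIn_comm (A B : Finset V) :
    ∑ a ∈ A, (nbrsIn G B a).card = ∑ b ∈ B, (nbrsIn G A b).card := by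
  simpa only [Finset.bipartiteAbove, Finset.bipartiteBelow, nbrsIn, G.adj_comm] using
    Finset.sum_card_bipartiteAbove_eq_sum_card_bipartiteBelow (s := A) (t := B) G.Adj

theorem even_sum_card_nbrsIn (G : SimpleGraph V) (S : Finset V) :
    Even (∑ v ∈ S, (nbrsIn G S v).card) := by
  induction S using Finset.induction_on with
  | empty => simp
  | insert v S hv ih =>
    have hsum (x : V) : (nbrsIn G (insert v S) x).card =
        (nbrsIn G {v} x).card + (nbrsIn G S x).card := by
      rw [← Finset.card_union_of_disjoint, nbrsIn, Finset.insert_eq, Finset.filter_union]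
      · rfl
      · exact (Finset.disjoint_singleton_left.2 hv).mono nbrsIn_subset nbrsIn_subset
    have hself : nbrsIn G {v} v = ∅ := by
      ext x
      simpa using fun h : x = v => h ▸ G.irrefl
    rw [Finset.sum_insert hv, hsum, Finset.sum_congr rfl fun x _ => hsum x,
      Finset.sum_add_distrib, sum_card_nbrsIn_comm S {v}, hself, Finset.sum_singleton,
      Finset.card_empty, zero_add, ← add_assoc]
    exact (Even.add_self _).add ih

namespace BookFreeOn

@[simp]
theorem zero_iff : BookFreeOn G 0 t S ↔ S.card ≤ t := by
  refine ⟨fun h => ?_, fun h Q _ _ => (Finset.card_filter_le _ _).trans h⟩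
  simpa using h ∅ (Finset.empty_subset S) (isNClique_zero.2 rfl)

theorem succ_iff : BookFreeOn G (m + 1) t S ↔ ∀ v ∈ S, BookFreeOn G m t (nbrsIn G S v) := by
  constructor
  · intro h v hv Q hQ hclique
    have hQv (q) (hq : q ∈ Q) : q ∈ S ∧ G.Adj v q := mem_nbrsIn.1 (hQ hq)
    have hins : insert v Q ⊆ S := Finset.insert_subset hv fun q hq => (hQv q hq).1
    have hcard := h _ hins (hclique.insert fun q hq => (hQv q hq).2)
    simpa only [nbrsIn, Finset.filter_filter, Finset.forall_mem_insert] using hcard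
  · intro h Q hQ hclique
    obtain ⟨v, hv⟩ := Finset.card_pos.1 (m.succ_pos.trans_eq hclique.card_eq.symm)
    have hsub : Q.erase v ⊆ nbrsIn G S v := fun q hq => mem_nbrsIn.2
      ⟨hQ (Finset.mem_of_mem_erase hq), hclique.isClique hv (Finset.mem_of_mem_erase hq)
        (Finset.ne_of_mem_erase hq).symm⟩
    have hcard := h v (hQ hv) _ hsub (hclique.erase_of_mem hv)
    rw [← Finset.insert_erase hv]
    simpa only [nbrsIn, Finset.filter_filter, Finset.forall_mem_insert] using hcard

theorem zero_right_iff : BookFreeOn G m 0 S ↔ ∀ Q ⊆ S, ¬ G.IsNClique (m + 1) Q := by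
  simp only [BookFreeOn, Nat.le_zero, Finset.card_eq_zero, Finset.filter_eq_empty_iff]
  constructor
  · intro h Q hQ hclique
    obtain ⟨v, hv⟩ := Finset.card_pos.1 (m.succ_pos.trans_eq hclique.card_eq.symm)
    exact h (Q.erase v) ((Finset.erase_subset v Q).trans hQ) (hclique.erase_of_mem hv) (hQ hv)
      fun q hq => hclique.isClique (Finset.mem_of_mem_erase hq) hv (Finset.ne_of_mem_erase hq)
  · intro h Q hQ hclique x hx hadj
    exact h (insert x Q) (Finset.insert_subset hx hQ)
      (hclique.insert fun q hq => (hadj q hq).symm)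

theorem subset (h : BookFreeOn G m t S) (hT : T ⊆ S) : BookFreeOn G m t T :=
  fun Q hQ hclique => (Finset.card_le_card (Finset.filter_subset_filter _ hT)).trans
    (h Q (hQ.trans hT) hclique)

theorem anti (h : BookFreeOn G m t S) (hH : ∀ a ∈ S, ∀ b ∈ S, H.Adj a b → G.Adj a b) :
    BookFreeOn H m t S := by
  intro Q hQ hclique
  refine (Finset.card_le_card fun x hx => ?_).trans (h Q hQ ⟨fun a ha b hb hab =>
    hH a (hQ ha) b (hQ hb) (hclique.isClique ha hb hab), hclique.card_eq⟩)
  simp only [Finset.mem_filter] at hx ⊢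
  exact ⟨hx.1, fun q hq => hH q (hQ hq) x hx.1 (hx.2 q hq)⟩

theorem of_card_le (h : S.card ≤ m + t) : BookFreeOn G m t S := by
  intro Q hQ hclique
  have hsub : (S.filter fun x => ∀ q ∈ Q, G.Adj q x) ⊆ S \ Q := fun x hx => by
    rw [Finset.mem_filter] at hx
    exact Finset.mem_sdiff.2 ⟨hx.1, fun hxQ => G.irrefl (hx.2 x hxQ)⟩
  have hcard := Finset.card_le_card hsub
  rw [Finset.card_sdiff_of_subset hQ, hclique.card_eq] at hcard
  omega

theorem card_le_of_isClique (h : BookFreeOn G m t S) (hS : G.IsClique S) : S.card ≤ m + t := by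
  by_contra! hlt
  obtain ⟨Q, hQ, hcard⟩ := Finset.exists_subset_card_eq (show m ≤ S.card by omega)
  have hsub : S \ Q ⊆ S.filter fun x => ∀ q ∈ Q, G.Adj q x := fun x hx => by
    rw [Finset.mem_sdiff] at hx
    exact Finset.mem_filter.2 ⟨hx.1, fun q hq => hS (hQ hq) hx.1 fun h => hx.2 (h ▸ hq)⟩
  have hle := (Finset.card_le_card hsub).trans (h Q hQ ⟨hS.subset hQ, hcard⟩)
  rw [Finset.card_sdiff_of_subset hQ, hcard] at hle
  omega

theorem isClique_compl (h : BookFreeOn G 1 0 S) : Gᶜ.IsClique S := by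
  intro a ha b hb hab
  refine (compl_adj ..).2 ⟨hab, fun hadj => ?_⟩
  have hempty := zero_iff.1 (succ_iff.1 h a ha)
  rw [Nat.le_zero, Finset.card_eq_zero] at hempty
  exact Finset.notMem_empty b (hempty ▸ mem_nbrsIn.2 ⟨hb, hadj⟩)

theorem isClique_compl_nbrsIn (h : BookFreeOn G 2 0 S) (hv : v ∈ S) :
    Gᶜ.IsClique (nbrsIn G S v) :=
  (succ_iff.1 h v hv).isClique_compl

theorem card_nbrsIn_isNClique_lt (h : BookFreeOn G m 1 T) (hP : G.IsNClique (m + 1) P)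
    (hPT : P ⊆ T) (hw : w ∈ T) (hwP : w ∉ P) : (nbrsIn G P w).card < m := by
  by_contra! hle
  obtain ⟨Q, hQ, hcard⟩ := Finset.exists_subset_card_eq hle
  have hQP : Q ⊆ P := hQ.trans nbrsIn_subset
  have hsub : insert w (P \ Q) ⊆ T.filter fun x => ∀ q ∈ Q, G.Adj q x := by
    refine Finset.insert_subset (Finset.mem_filter.2 ⟨hw, fun q hq => ?_⟩) fun x hx => ?_
    · exact (mem_nbrsIn.1 (hQ hq)).2.symm
    · rw [Finset.mem_sdiff] at hx
      exact Finset.mem_filter.2 ⟨hPT hx.1, fun q hq =>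
        hP.isClique (hQP hq) hx.1 fun h => hx.2 (h ▸ hq)⟩
  have hle' := (Finset.card_le_card hsub).trans
    (h Q (hQP.trans hPT) ⟨hP.isClique.subset hQP, hcard⟩)
  rw [Finset.card_insert_of_notMem fun hx => hwP (Finset.mem_sdiff.1 hx).1,
    Finset.card_sdiff_of_subset hQP, hP.card_eq, hcard] at hle'
  omega

end BookFreeOn

end BookFree

section Ramsey

variable {V : Type*} {G : SimpleGraph V} {T U : Finset V} {v w : V} {a s b t M N : ℕ}

/-- A Ramsey bound for the graphs of `BookFreeOn`: a set on which `G` is `(a, s)`-free and its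
complement is `(b, t)`-free has at most `N` elements. -/
def BookRamseyBound (V : Type*) (a s b t N : ℕ) : Prop :=
  ∀ (G : SimpleGraph V) (T : Finset V), BookFreeOn G a s T → BookFreeOn Gᶜ b t T → T.card ≤ N

namespace BookRamseyBound

theorem symm (h : BookRamseyBound V a s b t N) : BookRamseyBound V b t a s N :=
  fun G T hG hGc => h Gᶜ T hGc (by rwa [compl_compl])

theorem zero_left : BookRamseyBound V 0 s b t s :=
  fun _ _ hG _ => BookFreeOn.zero_iff.1 hG

theorem edge_left : BookRamseyBound V 1 0 b t (b + t) :=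
  fun _ _ hG hGc => hGc.card_le_of_isClique hG.isClique_compl

theorem card_nbrsIn_le (h : BookRamseyBound V a s b t M) (hG : BookFreeOn G (a + 1) s T)
    (hGc : BookFreeOn Gᶜ b t T) (hv : v ∈ T) : (nbrsIn G T v).card ≤ M :=
  h G _ (BookFreeOn.succ_iff.1 hG v hv) (hGc.subset nbrsIn_subset)

theorem card_nbrsIn_compl_le (h : BookRamseyBound V a s b t N) (hG : BookFreeOn G a s T)
    (hGc : BookFreeOn Gᶜ (b + 1) t T) (hv : v ∈ T) : (nbrsIn Gᶜ T v).card ≤ N :=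
  h.symm.card_nbrsIn_le hGc (by rwa [compl_compl]) hv

theorem step (hM : BookRamseyBound V a s (b + 1) t M) (hN : BookRamseyBound V (a + 1) s b t N) :
    BookRamseyBound V (a + 1) s (b + 1) t (M + N + 1) := by
  intro G T hG hGc
  obtain rfl | ⟨v, hv⟩ := T.eq_empty_or_nonempty
  · simp
  · have hdeg := hM.card_nbrsIn_le hG hGc hv
    have hcodeg := hN.card_nbrsIn_compl_le hG hGc hv
    have hcard := card_eq_nbrsIn_add_nbrsIn_compl (G := G) hv
    omega

theorem card_nbrsIn_eq (hM : BookRamseyBound V a s (b + 1) t M)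
    (hN : BookRamseyBound V (a + 1) s b t N) (hG : BookFreeOn G (a + 1) s U)
    (hGc : BookFreeOn Gᶜ (b + 1) t U) (hU : U.card = M + N + 1) (hv : v ∈ U) :
    (nbrsIn G U v).card = M ∧ (nbrsIn Gᶜ U v).card = N := by
  have hdeg := hM.card_nbrsIn_le hG hGc hv
  have hcodeg := hN.card_nbrsIn_compl_le hG hGc hv
  have hcard := card_eq_nbrsIn_add_nbrsIn_compl (G := G) hv
  omega

theorem of_forall_card_ne (h : ∀ (G : SimpleGraph V) (U : Finset V), BookFreeOn G a s U →
    BookFreeOn Gᶜ b t U → U.card ≠ N + 1) : BookRamseyBound V a s b t N := by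
  intro G T hG hGc
  by_contra! hlt
  obtain ⟨U, hU, hcard⟩ := Finset.exists_subset_card_eq (Nat.succ_le_of_lt hlt)
  exact h G U (hG.subset hU) (hGc.subset hU) hcard

theorem step_of_odd (hM : BookRamseyBound V a s (b + 1) t M)
    (hN : BookRamseyBound V (a + 1) s b t N) (hMo : Odd M) (hNo : Odd N) :
    BookRamseyBound V (a + 1) s (b + 1) t (M + N) := by
  refine of_forall_card_ne fun G U hG hGc hU => ?_
  have heven := even_sum_card_nbrsIn G U
  rw [Finset.sum_congr rfl fun v hv => (card_nbrsIn_eq hM hN hG hGc hU hv).1,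
    Finset.sum_const, smul_eq_mul, hU] at heven
  exact Nat.not_even_iff_odd.2 ((hMo.add_odd hNo).add_one.mul hMo) heven

end BookRamseyBound

/-! ### The Ramsey number of a triangle and `K₄` minus an edge -/

/-- A red triple dominates the blue neighbourhood twice, so any two of the blue neighbours have a
common red neighbour and hence form a blue edge. -/
theorem card_nbrsIn_compl_le_two_of_card_nbrsIn_eq_three (hG : BookFreeOn G 2 0 U)
    (hGc : BookFreeOn Gᶜ 2 1 U) (hv : v ∈ U)
    (hdeg : (nbrsIn G U v).card = 3) : (nbrsIn Gᶜ U v).card ≤ 2 := by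
  have hP : Gᶜ.IsNClique 3 (nbrsIn G U v) := ⟨hG.isClique_compl_nbrsIn hv, hdeg⟩
  have htwo (w) (hw : w ∈ nbrsIn Gᶜ U v) : 2 ≤ (nbrsIn G (nbrsIn G U v) w).card := by
    have hwP : w ∉ nbrsIn G U v := fun h =>
      ((compl_adj ..).1 (mem_nbrsIn.1 hw).2).2 (mem_nbrsIn.1 h).2
    have hlt := hGc.card_nbrsIn_isNClique_lt hP nbrsIn_subset (mem_nbrsIn.1 hw).1 hwP
    have hsum := card_nbrsIn_add_card_nbrsIn_compl (G := G) hwP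
    omega
  have hclique : Gᶜ.IsClique (nbrsIn Gᶜ U v) := by
    intro w hw x hx hwx
    obtain ⟨p, hp⟩ : (nbrsIn G (nbrsIn G U v) w ∩ nbrsIn G (nbrsIn G U v) x).Nonempty := by
      refine Finset.inter_nonempty_of_card_lt_card_add_card nbrsIn_subset nbrsIn_subset ?_
      have hw2 := htwo w hw
      have hx2 := htwo x hx
      omega
    simp only [Finset.mem_inter, mem_nbrsIn, Finset.mem_coe] at hp hw hx
    exact hG.isClique_compl_nbrsIn hp.1.1.1 (mem_nbrsIn.2 ⟨hw.1, hp.1.2.symm⟩)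
      (mem_nbrsIn.2 ⟨hx.1, hp.2.2.symm⟩) hwx
  exact (BookFreeOn.succ_iff.1 hGc v hv).card_le_of_isClique hclique

/-- If all red degrees are at most two, the blue neighbourhood `W` of `v` contains both red
neighbours of each of its vertices, so no red edge leaves `W`. -/
theorem mem_nbrsIn_compl_of_adj (hGc : BookFreeOn Gᶜ 2 1 U) (hv : v ∈ U)
    (hdeg : ∀ x ∈ U, (nbrsIn G U x).card ≤ 2)
    (hcodeg : (nbrsIn Gᶜ U v).card = 4) {x y : V} (hx : x ∈ nbrsIn Gᶜ U v) (hy : y ∈ U)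
    (hxy : G.Adj x y) : y ∈ nbrsIn Gᶜ U v := by
  have hblue := BookFreeOn.zero_iff.1
    (BookFreeOn.succ_iff.1 (BookFreeOn.succ_iff.1 hGc v hv) x hx)
  have hcard := card_eq_nbrsIn_add_nbrsIn_compl (G := G) hx
  have heq : nbrsIn G (nbrsIn Gᶜ U v) x = nbrsIn G U x :=
    Finset.eq_of_subset_of_card_le (nbrsIn_mono nbrsIn_subset) <|
      (hdeg x (mem_nbrsIn.1 hx).1).trans (by omega)
  exact (mem_nbrsIn.1 (heq.ge (mem_nbrsIn.2 ⟨hy, hxy⟩))).1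

theorem bookRamseyBound_20_11 : BookRamseyBound V 2 0 1 1 4 :=
  BookRamseyBound.edge_left.step BookRamseyBound.zero_left.symm

theorem bookRamseyBound_20_21 : BookRamseyBound V 2 0 2 1 6 := by
  refine BookRamseyBound.of_forall_card_ne fun G U hG hGc hU => ?_
  have hdeg3 (v) (hv : v ∈ U) := BookRamseyBound.edge_left.card_nbrsIn_le hG hGc hv
  have hcodeg4 (v) (hv : v ∈ U) := bookRamseyBound_20_11.card_nbrsIn_compl_le hG hGc hv
  have hsum (v) (hv : v ∈ U) := card_eq_nbrsIn_add_nbrsIn_compl (G := G) hv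
  have hdeg2 (v) (hv : v ∈ U) : (nbrsIn G U v).card ≤ 2 := by
    by_contra! hlt
    have hle := card_nbrsIn_compl_le_two_of_card_nbrsIn_eq_three hG hGc hv
      (le_antisymm (hdeg3 v hv) hlt)
    have hv3 := hdeg3 v hv
    have hvs := hsum v hv
    omega
  have hdeg_pos (v) (hv : v ∈ U) : 1 < (nbrsIn G U v).card := by
    have hv4 := hcodeg4 v hv
    have hvs := hsum v hv
    omega
  obtain ⟨v, hv⟩ := Finset.card_pos.1 (show 0 < U.card by omega)
  obtain ⟨a, ha⟩ := Finset.card_pos.1 (zero_lt_one.trans (hdeg_pos v hv))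
  rw [mem_nbrsIn] at ha
  obtain ⟨b, hb, hbv⟩ := Finset.exists_mem_ne (hdeg_pos a ha.1) v
  have hvb := hG.isClique_compl_nbrsIn ha.1 (mem_nbrsIn.2 ⟨hv, ha.2.symm⟩) hb hbv.symm
  rw [mem_nbrsIn] at hb
  have hcodeg : (nbrsIn Gᶜ U v).card = 4 := by
    have hv2 := hdeg2 v hv
    have hv4 := hcodeg4 v hv
    have hvs := hsum v hv
    omega
  have haW := mem_nbrsIn_compl_of_adj hGc hv hdeg2 hcodeg (mem_nbrsIn.2 ⟨hb.1, hvb⟩) ha.1 hb.2.symm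
  exact ((compl_adj ..).1 (mem_nbrsIn.1 haW).2).2 ha.2

/-! ### The Ramsey number of a triangle and `K₅` minus an edge -/

theorem two_le_card_common_nbrsIn (hG : BookFreeOn G 2 0 U) (hGc : BookFreeOn Gᶜ 3 1 U)
    (hv : v ∈ U) (hdeg : (nbrsIn G U v).card = 4) (hw : w ∈ nbrsIn Gᶜ U v) :
    2 ≤ (nbrsIn G (nbrsIn G U v) w).card := by
  rw [mem_nbrsIn, compl_adj] at hw
  have hwP : w ∉ nbrsIn G U v := fun h => hw.2.2 (mem_nbrsIn.1 h).2
  have hlt := hGc.card_nbrsIn_isNClique_lt ⟨hG.isClique_compl_nbrsIn hv, hdeg⟩ nbrsIn_subset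
    hw.1 hwP
  have hsum := card_nbrsIn_add_card_nbrsIn_compl (G := G) hwP
  omega

/-- Both sides count the red edges between the red and the blue neighbourhood of `v`: at least
`6 * 2` from the blue side and at most `4 * 3` from the red side. -/
theorem card_common_nbrsIn_eq_two (hG : BookFreeOn G 2 0 U) (hGc : BookFreeOn Gᶜ 3 1 U)
    (hreg : ∀ v ∈ U, (nbrsIn G U v).card = 4 ∧ (nbrsIn Gᶜ U v).card = 6)
    (hv : v ∈ U) (hw : w ∈ nbrsIn Gᶜ U v) : (nbrsIn G (nbrsIn G U v) w).card = 2 := by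
  have hge (x) (hx : x ∈ nbrsIn Gᶜ U v) : 2 ≤ (nbrsIn G (nbrsIn G U v) x).card :=
    two_le_card_common_nbrsIn hG hGc hv (hreg v hv).1 hx
  have hle (a) (ha : a ∈ nbrsIn G U v) : (nbrsIn G (nbrsIn Gᶜ U v) a).card ≤ 3 := by
    rw [mem_nbrsIn] at ha
    have hsub : nbrsIn G (nbrsIn Gᶜ U v) a ⊆ (nbrsIn G U a).erase v := fun x hx => by
      simp only [mem_nbrsIn, compl_adj] at hx
      exact Finset.mem_erase.2 ⟨hx.1.2.1.symm, mem_nbrsIn.2 ⟨hx.1.1, hx.2⟩⟩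
    have hcard := Finset.card_le_card hsub
    rwa [Finset.card_erase_of_mem (mem_nbrsIn.2 ⟨hv, ha.2.symm⟩), (hreg a ha.1).1] at hcard
  have hsum : ∑ x ∈ nbrsIn Gᶜ U v, (nbrsIn G (nbrsIn G U v) x).card ≤ ∑ x ∈ nbrsIn Gᶜ U v, 2 := by
    rw [sum_card_nbrsIn_comm, Finset.sum_const, (hreg v hv).2]
    refine (Finset.sum_le_card_nsmul _ _ 3 hle).trans ?_
    rw [(hreg v hv).1]
    simp
  exact ((Finset.sum_eq_sum_iff_of_le hge).1
    (le_antisymm (Finset.sum_le_sum hge) hsum) w hw).symm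

theorem card_private_nbrsIn_eq_two (hG : BookFreeOn G 2 0 U) (hGc : BookFreeOn Gᶜ 3 1 U)
    (hreg : ∀ v ∈ U, (nbrsIn G U v).card = 4 ∧ (nbrsIn Gᶜ U v).card = 6)
    (hv : v ∈ U) (hw : w ∈ nbrsIn Gᶜ U v) : (nbrsIn Gᶜ (nbrsIn G U v) w).card = 2 := by
  have hwP : w ∉ nbrsIn G U v := fun h =>
    ((compl_adj ..).1 (mem_nbrsIn.1 hw).2).2 (mem_nbrsIn.1 h).2
  have hsum := card_nbrsIn_add_card_nbrsIn_compl (G := G) hwP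
  rw [(hreg v hv).1, card_common_nbrsIn_eq_two hG hGc hreg hv hw] at hsum
  omega

/-- A common red neighbour of `x` and `v` is not a red neighbour of `w`, as `x` and `w` are joined
in red; equality holds because both sides have two elements. -/
theorem common_nbrsIn_eq_private_nbrsIn (hG : BookFreeOn G 2 0 U) (hGc : BookFreeOn Gᶜ 3 1 U)
    (hreg : ∀ v ∈ U, (nbrsIn G U v).card = 4 ∧ (nbrsIn Gᶜ U v).card = 6) {x : V}
    (hv : v ∈ U) (hw : w ∈ nbrsIn Gᶜ U v) (hx : x ∈ nbrsIn Gᶜ (nbrsIn G U w) v) :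
    nbrsIn G (nbrsIn G U v) x = nbrsIn Gᶜ (nbrsIn G U v) w := by
  have hxv : x ∈ nbrsIn Gᶜ U v := mem_nbrsIn.2
    ⟨(mem_nbrsIn.1 (mem_nbrsIn.1 hx).1).1, (mem_nbrsIn.1 hx).2⟩
  refine Finset.eq_of_subset_of_card_le (fun p hp => ?_) ?_
  · simp only [mem_nbrsIn, compl_adj] at hp hx hw ⊢
    have hwp : w ≠ p := fun h => hw.2.2 (h ▸ hp.1.2)
    exact ⟨hp.1, (compl_adj ..).1 <| hG.isClique_compl_nbrsIn hx.1.1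
      (mem_nbrsIn.2 ⟨hw.1, hx.1.2.symm⟩) (mem_nbrsIn.2 ⟨hp.1.1, hp.2⟩) hwp⟩
  · rw [card_common_nbrsIn_eq_two hG hGc hreg hv hxv,
      card_private_nbrsIn_eq_two hG hGc hreg hv hw]

theorem bookRamseyBound_20_31 : BookRamseyBound V 2 0 3 1 10 := by
  refine BookRamseyBound.of_forall_card_ne fun G U hG hGc hU => ?_
  have hreg (v) (hv : v ∈ U) := BookRamseyBound.edge_left.card_nbrsIn_eq bookRamseyBound_20_21
    hG hGc (by rw [hU]) hv
  obtain ⟨v, hv⟩ := Finset.card_pos.1 (show 0 < U.card by omega)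
  obtain ⟨w, hw⟩ := Finset.card_pos.1 (show 0 < (nbrsIn Gᶜ U v).card by rw [(hreg v hv).2]; simp)
  have hvw : v ∈ nbrsIn Gᶜ U w := mem_nbrsIn.2 ⟨hv, (mem_nbrsIn.1 hw).2.symm⟩
  have hX := card_private_nbrsIn_eq_two hG hGc hreg (mem_nbrsIn.1 hw).1 hvw
  obtain ⟨p, hp, q, hq, hpq⟩ := Finset.one_lt_card.1
    (card_private_nbrsIn_eq_two hG hGc hreg hv hw ▸ one_lt_two)
  have hsub : insert v (nbrsIn Gᶜ (nbrsIn G U w) v) ⊆ nbrsIn G (nbrsIn G U p) q := by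
    refine Finset.insert_subset ?_ fun x hx => ?_
    · simp only [mem_nbrsIn] at hp hq ⊢
      exact ⟨⟨hv, hp.1.2.symm⟩, hq.1.2.symm⟩
    · rw [← common_nbrsIn_eq_private_nbrsIn hG hGc hreg hv hw hx] at hp hq
      simp only [mem_nbrsIn] at hp hq hx ⊢
      exact ⟨⟨hx.1.1, hp.2.symm⟩, hq.2.symm⟩
  have hpqU : q ∈ nbrsIn Gᶜ U p := mem_nbrsIn.2
    ⟨(mem_nbrsIn.1 (mem_nbrsIn.1 hq).1).1,
      hG.isClique_compl_nbrsIn hv (mem_nbrsIn.1 hp).1 (mem_nbrsIn.1 hq).1 hpq⟩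
  have hle := Finset.card_le_card hsub
  rw [Finset.card_insert_of_notMem notMem_nbrsIn_self, hX,
    card_common_nbrsIn_eq_two hG hGc hreg (mem_nbrsIn.1 (mem_nbrsIn.1 hp).1).1 hpqU] at hle
  omega

/-! ### The table of Ramsey numbers -/

theorem bookRamseyBound_20_20 : BookRamseyBound V 2 0 2 0 5 :=
  BookRamseyBound.edge_left.step BookRamseyBound.edge_left.symm

theorem bookRamseyBound_20_30 : BookRamseyBound V 2 0 3 0 8 :=
  BookRamseyBound.edge_left.step_of_odd bookRamseyBound_20_20 (by decide) (by decide)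

theorem bookRamseyBound_30_30 : BookRamseyBound V 3 0 3 0 17 :=
  bookRamseyBound_20_30.step bookRamseyBound_20_30.symm

theorem bookRamseyBound_11_11 : BookRamseyBound V 1 1 1 1 2 :=
  BookRamseyBound.zero_left.step_of_odd BookRamseyBound.zero_left.symm odd_one odd_one

theorem bookRamseyBound_11_21 : BookRamseyBound V 1 1 2 1 4 :=
  BookRamseyBound.zero_left.step bookRamseyBound_11_11

theorem bookRamseyBound_11_31 : BookRamseyBound V 1 1 3 1 6 :=
  BookRamseyBound.zero_left.step bookRamseyBound_11_21

theorem bookRamseyBound_21_21 : BookRamseyBound V 2 1 2 1 9 :=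
  bookRamseyBound_11_21.step bookRamseyBound_11_21.symm

theorem bookRamseyBound_21_31 : BookRamseyBound V 2 1 3 1 16 :=
  bookRamseyBound_11_31.step bookRamseyBound_21_21

theorem bookRamseyBound_31_31 : BookRamseyBound V 3 1 3 1 33 :=
  bookRamseyBound_21_31.step bookRamseyBound_21_31.symm

end Ramsey

/-! ### Blown-up Ramsey colourings -/

section Blowup

variable {V : Type*} {G : SimpleGraph V} {T D W : Finset V} {m n a b s t w M N : ℕ}

/-- The vertices of `D` are candidates for being replaced by at least two vertices in a blow-up of
`T`: their neighbourhoods in `T` are `K_{m+1}`-free in `G` and `K_{n+1}`-free in its complement. -/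
structure IsBlowupSet (G : SimpleGraph V) (m n : ℕ) (T D : Finset V) : Prop where
  subset : D ⊆ T
  free : ∀ d ∈ D, BookFreeOn G m 0 (nbrsIn G T d)
  free_compl : ∀ d ∈ D, BookFreeOn Gᶜ n 0 (nbrsIn Gᶜ T d)

theorem BookFreeOn.union (hD : D ⊆ T) (hfree : ∀ d ∈ D, BookFreeOn G m 0 (nbrsIn G T d))
    (hWT : W ⊆ T) (hW : BookFreeOn G (m + 1) 0 W) : BookFreeOn G (m + 1) 0 (D ∪ W) := by
  rw [BookFreeOn.zero_right_iff] at hW ⊢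
  intro Q hQ hclique
  by_cases hQD : ∃ d ∈ D, d ∈ Q
  · obtain ⟨d, hdD, hdQ⟩ := hQD
    refine BookFreeOn.zero_right_iff.1 (hfree d hdD) (Q.erase d) (fun q hq => ?_)
      (hclique.erase_of_mem hdQ)
    rw [Finset.mem_erase] at hq
    exact mem_nbrsIn.2 ⟨Finset.union_subset hD hWT (hQ hq.2),
      hclique.isClique hdQ hq.2 hq.1.symm⟩
  · push Not at hQD
    exact hW Q (fun q hq => (Finset.mem_union.1 (hQ hq)).resolve_left fun h => hQD q h hq) hclique

namespace IsBlowupSet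

theorem card_union_le (hD : IsBlowupSet G m n T D)
    (hN : BookRamseyBound V (m + 1) 0 (n + 1) 0 N) (hWT : W ⊆ T)
    (hW : BookFreeOn G (m + 1) 0 W) (hWc : BookFreeOn Gᶜ (n + 1) 0 W) : (D ∪ W).card ≤ N :=
  hN G _ (BookFreeOn.union hD.subset hD.free hWT hW)
    (BookFreeOn.union hD.subset hD.free_compl hWT hWc)

theorem card_le (hD : IsBlowupSet G m n T D) (hN : BookRamseyBound V (m + 1) 0 (n + 1) 0 N) :
    D.card ≤ N := by
  simpa using hD.card_union_le hN (Finset.empty_subset T)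
    (BookFreeOn.of_card_le (by simp)) (BookFreeOn.of_card_le (by simp))

theorem card_add_le (hD : IsBlowupSet G m n T D) (hN : BookRamseyBound V (m + 1) 0 (n + 1) 0 N)
    (hT : N < T.card) (hm : w ≤ m + 1) (hn : w ≤ n + 1) : D.card + w ≤ N := by
  obtain hlt | hle := lt_or_ge (T \ D).card w
  · have hcard := hD.card_union_le hN Finset.sdiff_subset
      (BookFreeOn.of_card_le (hlt.le.trans hm)) (BookFreeOn.of_card_le (hlt.le.trans hn))
    rw [Finset.union_sdiff_of_subset hD.subset] at hcard
    omega
  · obtain ⟨W, hW, rfl⟩ := Finset.exists_subset_card_eq hle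
    have hcard := hD.card_union_le hN (hW.trans Finset.sdiff_subset)
      (BookFreeOn.of_card_le hm) (BookFreeOn.of_card_le hn)
    rwa [Finset.card_union_of_disjoint (Finset.disjoint_sdiff.mono_right hW)] at hcard

theorem card_le_of_nonempty (hD : IsBlowupSet G m n T D) (hM : BookRamseyBound V m 0 b t M)
    (hN : BookRamseyBound V a s n 0 N) (hG : BookFreeOn G a s T) (hGc : BookFreeOn Gᶜ b t T)
    (hne : D.Nonempty) : T.card ≤ M + N + 1 := by
  obtain ⟨d, hd⟩ := hne
  have hdeg := hM G _ (hD.free d hd) (hGc.subset nbrsIn_subset)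
  have hcodeg := hN G _ (hG.subset nbrsIn_subset) (hD.free_compl d hd)
  have hcard := card_eq_nbrsIn_add_nbrsIn_compl (G := G) (hD.subset hd)
  omega

theorem card_add_card_le_ten (hD : IsBlowupSet G 1 1 T D) (hG : BookFreeOn G 2 1 T)
    (hGc : BookFreeOn Gᶜ 2 1 T) : T.card + D.card ≤ 10 := by
  obtain rfl | hne := D.eq_empty_or_nonempty
  · have hT := bookRamseyBound_21_21 G T hG hGc
    simp only [Finset.card_empty]
    omega
  have hT := hD.card_le_of_nonempty .edge_left BookRamseyBound.edge_left.symm hG hGc hne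
  have hcard := hD.card_le bookRamseyBound_20_20
  by_cases hlt : 5 < T.card
  · have hcard' := hD.card_add_le bookRamseyBound_20_20 hlt le_rfl le_rfl
    omega
  · omega

theorem card_add_card_le_seventeen (hD : IsBlowupSet G 1 2 T D) (hG : BookFreeOn G 2 1 T)
    (hGc : BookFreeOn Gᶜ 3 1 T) : T.card + D.card ≤ 17 := by
  obtain rfl | hne := D.eq_empty_or_nonempty
  · have hT := bookRamseyBound_21_31 G T hG hGc
    simp only [Finset.card_empty]
    omega
  have hT := hD.card_le_of_nonempty .edge_left bookRamseyBound_20_21.symm hG hGc hne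
  have hcard := hD.card_le bookRamseyBound_20_30
  by_cases hlt : 8 < T.card
  · have hcard' := hD.card_add_le bookRamseyBound_20_30 hlt le_rfl (Nat.le_succ 2)
    omega
  · omega

theorem card_add_four_le (hD : IsBlowupSet G 2 2 T D) (hG : BookFreeOn G 3 1 T)
    (hGc : BookFreeOn Gᶜ 3 1 T) (hcard : 5 ≤ (T \ D).card) : D.card + 4 ≤ 17 := by
  have hnot {H : SimpleGraph V} (hH : BookFreeOn H 3 1 T) :
      ∃ x ∈ T \ D, ∃ y ∈ T \ D, x ≠ y ∧ ¬ H.Adj x y := by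
    by_contra! hclique
    have hle := (hH.subset Finset.sdiff_subset).card_le_of_isClique
      fun x hx y hy => hclique x hx y hy
    omega
  have hfree {H : SimpleGraph V} {W : Finset V} (hW : W.card = 4) {x y : V} (hx : x ∈ W)
      (hy : y ∈ W) (hxy : x ≠ y) (hadj : ¬ H.Adj x y) : BookFreeOn H 3 0 W := by
    refine BookFreeOn.zero_right_iff.2 fun Q hQ hclique => hadj ?_
    rw [Finset.eq_of_subset_of_card_le hQ (hW.trans hclique.card_eq.symm).le] at hclique
    exact hclique.isClique hx hy hxy
  obtain ⟨x, hx, y, hy, hxy, hadj⟩ := hnot hG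
  obtain ⟨x', hx', y', hy', hxy', hadj'⟩ := hnot hGc
  obtain ⟨W, hsub, hW, hW4⟩ := Finset.exists_subsuperset_card_eq (s := {x, y, x', y'})
    (t := T \ D) (n := 4) (by simp [Finset.insert_subset_iff, *]) Finset.card_le_four (by omega)
  simp only [Finset.insert_subset_iff, Finset.singleton_subset_iff] at hsub
  have hle := hD.card_union_le bookRamseyBound_30_30 (hW.trans Finset.sdiff_subset)
    (hfree hW4 hsub.1 hsub.2.1 hxy hadj) (hfree hW4 hsub.2.2.1 hsub.2.2.2 hxy' hadj')
  rwa [Finset.card_union_of_disjoint (Finset.disjoint_sdiff.mono_right hW), hW4] at hle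

theorem card_add_card_le_thirtyFour (hD : IsBlowupSet G 2 2 T D) (hG : BookFreeOn G 3 1 T)
    (hGc : BookFreeOn Gᶜ 3 1 T) : T.card + D.card ≤ 34 := by
  obtain rfl | hne := D.eq_empty_or_nonempty
  · have hT := bookRamseyBound_31_31 G T hG hGc
    simp only [Finset.card_empty]
    omega
  have hT := hD.card_le_of_nonempty bookRamseyBound_20_31 bookRamseyBound_20_31.symm hG hGc hne
  have hcard := hD.card_le bookRamseyBound_30_30
  by_cases hlt : 17 < T.card
  · have hcard' := hD.card_add_le bookRamseyBound_30_30 hlt le_rfl le_rfl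
    have hsdiff := Finset.card_sdiff_of_subset hD.subset
    by_cases h5 : 5 ≤ (T \ D).card
    · have hcard4 := hD.card_add_four_le hG hGc h5
      omega
    · omega
  · omega

end IsBlowupSet

end Blowup

section Join

variable {V : Type*} {G : SimpleGraph V} {S A B : Finset V} {m n t u : ℕ}

namespace BookFreeOn

theorem mono (h : BookFreeOn G m t S) (htu : t ≤ u) : BookFreeOn G m u S :=
  fun Q hQ hclique => (h Q hQ hclique).trans htu

theorem right_of_left_nonempty (h : BookFreeOn G (m + 1) t S) (hA : A ⊆ S) (hB : B ⊆ S)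
    (hAB : G.IsCompleteBetween A B) (hne : A.Nonempty) : BookFreeOn G m t B := by
  obtain ⟨a, ha⟩ := hne
  exact (succ_iff.1 h a (hA ha)).subset fun b hb => mem_nbrsIn.2 ⟨hB hb, hAB ha hb⟩

theorem right_of_not_left (h : BookFreeOn G (n + (m + 1)) t S) (hA : A ⊆ S) (hB : B ⊆ S)
    (hAB : G.IsCompleteBetween A B) (hnot : ¬ BookFreeOn G n t A) : BookFreeOn G m 0 B := by
  induction m generalizing S B with
  | zero =>
    rw [zero_iff, Nat.le_zero, Finset.card_eq_zero, Finset.eq_empty_iff_forall_notMem]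
    exact fun b hb => hnot ((succ_iff.1 h b (hB hb)).subset fun a ha =>
      mem_nbrsIn.2 ⟨hA ha, (hAB ha hb).symm⟩)
  | succ m ih =>
    refine succ_iff.2 fun b hb => ih (succ_iff.1 h b (hB hb)) (fun a ha => ?_)
      (Finset.filter_subset_filter _ hB) fun a ha x hx => hAB ha (nbrsIn_subset hx)
    exact mem_nbrsIn.2 ⟨hA ha, (hAB ha hb).symm⟩

theorem one_one_or_of_isCompleteBetween (h : BookFreeOn G (m + 1) 1 S) (hm : m ≤ 2)
    (hA : A ⊆ S) (hB : B ⊆ S) (hAB : G.IsCompleteBetween A B) :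
    BookFreeOn G 1 1 A ∨ BookFreeOn G 1 1 B := by
  refine or_iff_not_imp_left.2 fun hnot => ?_
  obtain _ | m := m
  · exact absurd (h.subset hA) hnot
  · refine BookFreeOn.mono ?_ zero_le_one
    have hfree := right_of_not_left (m := m) (by rwa [add_comm 1]) hA hB hAB hnot
    obtain rfl | rfl : m = 0 ∨ m = 1 := by omega
    · rw [zero_iff] at hfree
      exact of_card_le (hfree.trans (Nat.zero_le _))
    · exact hfree

end BookFreeOn

end Join

section GallaiBound

variable (h t : ℕ)

/-- An upper bound for the order of a Gallai colouring that avoids `K₅` minus an edge in `h`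
colours, `K₄` minus an edge in `t` colours and `P₃` in all the others. For even `h` and odd `t` it
is attained as soon as there is one further colour, even by colourings without triangles in the `t`
colours; the values for the other parities are merely small enough for the induction. -/
def gallaiBound : ℕ :=
  (if Even h then if Even t then 2 else 4 else if Even t then 8 else 17) *
    17 ^ (h / 2) * 5 ^ (t / 2)

theorem gallaiBound_add_two_left : gallaiBound (h + 2) t = 17 * gallaiBound h t := by
  simp only [gallaiBound, Nat.even_add, even_two, iff_true, Nat.add_div_right _ two_pos,
    pow_succ]
  ring

theorem gallaiBound_add_two_right : gallaiBound h (t + 2) = 5 * gallaiBound h t := by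
  simp only [gallaiBound, Nat.even_add, even_two, iff_true, Nat.add_div_right _ two_pos,
    pow_succ]
  ring

theorem gallaiBound_cases : ∃ x > 0,
    gallaiBound h t = 2 * x ∧ gallaiBound h (t + 1) = 4 * x ∧
      gallaiBound (h + 1) t = 8 * x ∧ gallaiBound (h + 1) (t + 1) = 17 * x ∨
    gallaiBound h t = 4 * x ∧ gallaiBound h (t + 1) = 10 * x ∧
      gallaiBound (h + 1) t = 17 * x ∧ gallaiBound (h + 1) (t + 1) = 40 * x ∨
    gallaiBound h t = 8 * x ∧ gallaiBound h (t + 1) = 17 * x ∧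
      gallaiBound (h + 1) t = 34 * x ∧ gallaiBound (h + 1) (t + 1) = 68 * x ∨
    gallaiBound h t = 17 * x ∧ gallaiBound h (t + 1) = 40 * x ∧
      gallaiBound (h + 1) t = 68 * x ∧ gallaiBound (h + 1) (t + 1) = 170 * x := by
  refine ⟨17 ^ (h / 2) * 5 ^ (t / 2), by positivity, ?_⟩
  have hdiv_even (a : ℕ) : 2 * a / 2 = a := by omega
  have hdiv_odd (a : ℕ) : (2 * a + 1) / 2 = a := by omega
  have hdiv_succ (a : ℕ) : (2 * a + 1 + 1) / 2 = a + 1 := by omega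
  obtain ⟨m, rfl | rfl⟩ := h.even_or_odd' <;> obtain ⟨n, rfl | rfl⟩ := t.even_or_odd' <;>
  simp only [gallaiBound, Nat.even_add_one, even_two_mul, not_true_eq_false, not_false_eq_true,
    if_true, if_false, hdiv_even, hdiv_odd, hdiv_succ, pow_succ] <;>
  grind

theorem two_le_gallaiBound : 2 ≤ gallaiBound h t := by
  have hcases := gallaiBound_cases h t
  omega

theorem two_mul_gallaiBound_le : 2 * gallaiBound h t ≤ gallaiBound h (t + 1) := by
  have hcases := gallaiBound_cases h t
  omega

theorem gallaiBound_add_le : gallaiBound h t + gallaiBound h (t + 1) ≤ gallaiBound (h + 1) t := by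
  have hcases := gallaiBound_cases h t
  omega

theorem seventeen_mul_gallaiBound_le :
    17 * gallaiBound h t ≤ 2 * gallaiBound (h + 1) (t + 1) := by
  have hcases := gallaiBound_cases h t
  omega

theorem two_mul_gallaiBound_add_le :
    2 * gallaiBound h (t + 1) + gallaiBound (h + 1) t ≤ gallaiBound (h + 1) (t + 1) := by
  have hcases := gallaiBound_cases h t
  omega

theorem gallaiBound_add_add_le :
    gallaiBound h (t + 1) + gallaiBound (h + 1) t + gallaiBound (h + 1) (t + 1) ≤
      gallaiBound (h + 2) t := by
  have hcases := gallaiBound_cases h t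
  have htwo := gallaiBound_add_two_left h t
  omega

theorem gallaiBound_add_two_mul_le :
    gallaiBound h (t + 2) + 2 * gallaiBound (h + 1) t ≤ gallaiBound (h + 2) t := by
  have hcases := gallaiBound_cases h t
  have htwo := gallaiBound_add_two_left h t
  have htwo' := gallaiBound_add_two_right h t
  omega

end GallaiBound

/-- A symmetric colouring of the pairs of vertices without rainbow triangles, on an arbitrary vertex
type and with an arbitrary type of colours. The colours of the diagonal pairs are irrelevant. -/
structure GallaiColoring (V K : Type*) where
  color : V → V → K
  symm : ∀ u v, color u v = color v u
  not_rainbow : ∀ u v w, u ≠ v → u ≠ w → v ≠ w →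
    color u v = color u w ∨ color u v = color v w ∨ color u w = color v w

namespace GallaiColoring

variable {V K : Type*} {c : GallaiColoring V K} {S : Finset V} {i a b g : K}
  {v w x y : V} {p : V → V}

/-- The graph formed by the edges of colour `i`. -/
def graph (c : GallaiColoring V K) (i : K) : SimpleGraph V where
  Adj u v := u ≠ v ∧ c.color u v = i
  symm := ⟨fun u v h => ⟨h.1.symm, c.symm u v ▸ h.2⟩⟩
  loopless := ⟨fun _ h => h.1 rfl⟩

theorem graph_adj : (c.graph i).Adj v w ↔ v ≠ w ∧ c.color v w = i :=
  Iff.rfl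

/-- The graph formed by the edges of colour `i` with both ends in `S`. -/
def graphOn (c : GallaiColoring V K) (i : K) (S : Finset V) : SimpleGraph V where
  Adj u v := (c.graph i).Adj u v ∧ u ∈ S ∧ v ∈ S
  symm := ⟨fun _ _ h => ⟨h.1.symm, h.2.2, h.2.1⟩⟩
  loopless := ⟨fun _ h => h.1.ne rfl⟩

/-- The edges of colour `i` inside `S` connect all vertices of `S`. -/
def ConnectedOn (c : GallaiColoring V K) (i : K) (S : Finset V) : Prop :=
  ∀ x ∈ S, ∀ y ∈ S, (c.graphOn i S).Reachable x y

theorem ConnectedOn.exists_crossing_edge (h : c.ConnectedOn i S) {X : Set V} (hx : x ∈ S)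
    (hxX : x ∈ X) (hy : y ∈ S) (hyX : y ∉ X) :
    ∃ u ∈ X, ∃ w ∈ S, w ∉ X ∧ (c.graph i).Adj u w := by
  obtain ⟨walk⟩ := h x hx y hy
  obtain ⟨d, -, hfst, hsnd⟩ := walk.exists_boundary_dart X hxX hyX
  exact ⟨d.fst, hfst, d.snd, d.adj.2.2, hsnd, d.adj.1⟩

theorem ConnectedOn.exists_adj (h : c.ConnectedOn i S) (hx : x ∈ S) (hy : y ∈ S) (hxy : y ≠ x) :
    ∃ w ∈ S, (c.graph i).Adj x w := by
  obtain ⟨u, rfl, w, hw, -, hadj⟩ := h.exists_crossing_edge (X := {x}) hx rfl hy hxy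
  exact ⟨w, hw, hadj⟩

theorem color_eq_of_reachable (hx : x ∈ S) (hreach : (c.graphOn i S).Reachable v w)
    (hnot : ¬ (c.graphOn i S).Reachable v x) : c.color x v = c.color x w := by
  obtain ⟨walk⟩ := hreach
  induction walk with
  | nil => rfl
  | @cons v u w hadj _ ih =>
    have hnot' : ¬ (c.graphOn i S).Reachable u x := fun h => hnot (hadj.reachable.trans h)
    rw [← ih hnot']
    have hvx : v ≠ x := fun h => hnot (h ▸ .rfl)
    have hux : u ≠ x := fun h => hnot' (h ▸ .rfl)
    have hcolor {z : V} (hz : z ∈ S) (hzx : z ≠ x) (hznot : ¬ (c.graphOn i S).Reachable z x) :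
        c.color x z ≠ i := fun h =>
      hznot (Adj.reachable ⟨graph_adj.2 ⟨hzx, c.symm x z ▸ h⟩, hz, hx⟩)
    have hv := hcolor hadj.2.1 hvx hnot
    have hu := hcolor hadj.2.2 hux hnot'
    have hvu := (graph_adj.1 hadj.1).2
    obtain h | h | h := c.not_rainbow x v u hvx.symm hux.symm hadj.1.ne
    · exact h
    · exact absurd (h.trans hvu) hv
    · exact absurd (h.trans hvu) hu

/-! ### Every set is disconnected in all but two colours -/

section Insert

variable (hv : v ∉ S)
include hv

theorem exists_reachable_color_eq (hg : c.ConnectedOn g (insert v S)) (hy : y ∈ S) :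
    ∃ x ∈ S, (c.graphOn g S).Reachable y x ∧ c.color v x = g := by
  obtain ⟨u, ⟨huS, hu⟩, w, hw, hwX, hadj⟩ := hg.exists_crossing_edge
    (X := {x | x ∈ S ∧ (c.graphOn g S).Reachable y x}) (Finset.mem_insert_of_mem hy)
    ⟨hy, .rfl⟩ (Finset.mem_insert_self v S) fun h => hv h.1
  obtain rfl | hwS := Finset.mem_insert.1 hw
  · exact ⟨u, huS, hu, (graph_adj.1 hadj.symm).2⟩
  · exact absurd ⟨hwS, hu.trans (Adj.reachable ⟨hadj, huS, hwS⟩)⟩ hwX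

theorem color_eq_of_not_reachable (hy : y ∈ S) (hx : x ∈ S) (hvy : c.color v y ≠ g)
    (hvx : c.color v x = g) (hnot : ¬ (c.graphOn g S).Reachable y x) :
    c.color x y = c.color v y := by
  have hyx : y ≠ x := fun h => hnot (h ▸ .rfl)
  obtain h | h | h := c.not_rainbow v x y (fun h => hv (h ▸ hx)) (fun h => hv (h ▸ hy)) hyx.symm
  · exact absurd (h.symm.trans hvx) hvy
  · have hadj : (c.graphOn g S).Adj y x :=
      ⟨graph_adj.2 ⟨hyx, (c.symm y x).trans (h.symm.trans hvx)⟩, hy, hx⟩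
    exact absurd hadj.reachable hnot
  · exact h.symm

theorem reachable_of_color_ne (hg : c.ConnectedOn g (insert v S)) (hx : x ∈ S) (hy : y ∈ S)
    (hvx : c.color v x ≠ g) (hvy : c.color v y ≠ g) (hne : c.color v x ≠ c.color v y) :
    (c.graphOn g S).Reachable x y := by
  by_contra hnot
  obtain ⟨x', hx', hxx', hvx'⟩ := exists_reachable_color_eq hv hg hx
  obtain ⟨y', hy', hyy', hvy'⟩ := exists_reachable_color_eq hv hg hy
  have hxy' : ¬ (c.graphOn g S).Reachable x y' := fun h => hnot (h.trans hyy'.symm)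
  have hyx' : ¬ (c.graphOn g S).Reachable y x' := fun h => hnot (hxx'.trans h.symm)
  refine hne ?_
  rw [← color_eq_of_not_reachable hv hx hy' hvx hvy' hxy',
    ← color_eq_of_not_reachable hv hy hx' hvy hvx' hyx', c.symm y' x, c.symm x' y,
    ← color_eq_of_reachable hx hyy' fun h => hnot h.symm,
    ← color_eq_of_reachable hy hxx' hnot, c.symm]

theorem connectedOn_of_insert (hg : c.ConnectedOn g (insert v S)) (hx : x ∈ S) (hy : y ∈ S)
    (hvx : c.color v x ≠ g) (hvy : c.color v y ≠ g) (hne : c.color v x ≠ c.color v y) :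
    c.ConnectedOn g S := by
  have hxy := reachable_of_color_ne hv hg hx hy hvx hvy hne
  suffices hall : ∀ z ∈ S, (c.graphOn g S).Reachable x z from
    fun z hz z' hz' => (hall z hz).symm.trans (hall z' hz')
  intro z hz
  by_contra hnot
  obtain ⟨z', hz', hzz', hvz'⟩ := exists_reachable_color_eq hv hg hz
  have hxz' : ¬ (c.graphOn g S).Reachable x z' := fun h => hnot (h.trans hzz'.symm)
  have hyz' : ¬ (c.graphOn g S).Reachable y z' := fun h => hxz' (hxy.trans h)
  refine hne ?_
  rw [← color_eq_of_not_reachable hv hx hz' hvx hvz' hxz',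
    ← color_eq_of_not_reachable hv hy hz' hvy hvz' hyz', color_eq_of_reachable hz' hxy hxz']

end Insert

theorem not_connectedOn_three (hS : 1 < S.card) (hab : a ≠ b) (hag : a ≠ g) (hbg : b ≠ g) :
    ¬ (c.ConnectedOn a S ∧ c.ConnectedOn b S ∧ c.ConnectedOn g S) := by
  induction S using Finset.induction_on with
  | empty => simp at hS
  | insert v S hv ih =>
    rintro ⟨ha, hb, hg⟩
    have hexists {l : K} (hl : c.ConnectedOn l (insert v S)) : ∃ x ∈ S, c.color v x = l := by
      obtain ⟨y, hy, hyv⟩ := Finset.exists_mem_ne hS v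
      obtain ⟨x, hx, hadj⟩ := hl.exists_adj (Finset.mem_insert_self v S) hy hyv
      exact ⟨x, Finset.mem_of_mem_insert_of_ne hx hadj.ne.symm, (graph_adj.1 hadj).2⟩
    obtain ⟨x, hx, rfl⟩ := hexists ha
    obtain ⟨y, hy, rfl⟩ := hexists hb
    obtain ⟨z, hz, rfl⟩ := hexists hg
    exact ih (Finset.one_lt_card.2 ⟨x, hx, y, hy, fun h => hab (h ▸ rfl)⟩)
      ⟨connectedOn_of_insert hv ha hy hz hab.symm hag.symm hbg,
        connectedOn_of_insert hv hb hx hz hab hbg.symm hag,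
        connectedOn_of_insert hv hg hx hy hag hbg hab⟩

/-! ### Gallai partitions -/

/-- A Gallai partition of `S` into at least two parts, encoded by the map `p` that sends every
vertex to the representative of its part. -/
structure IsGallaiPartition (c : GallaiColoring V K) (S : Finset V) (p : V → V) : Prop where
  mapsTo : ∀ x ∈ S, p x ∈ S
  idem : ∀ x ∈ S, p (p x) = p x
  color_eq : ∀ x ∈ S, ∀ y ∈ S, p x ≠ p y → c.color x y = c.color (p x) (p y)
  one_lt_card : 1 < (S.image p).card

theorem isGallaiPartition_id (hS : 1 < S.card) : c.IsGallaiPartition S id :=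
  ⟨fun _ hx => hx, fun _ _ => rfl, fun _ _ _ _ _ => rfl, by rwa [Finset.image_id]⟩

/-- Merge into the part of `v` all parts that are joined to it by a path of colour `i` between
representatives. -/
noncomputable def mergeParts (c : GallaiColoring V K) (i : K) (S : Finset V) (p : V → V) (v : V) :
    V → V :=
  fun x => if (c.graphOn i (S.image p)).Reachable v (p x) then v else p x

namespace IsGallaiPartition

theorem map_eq_self (hp : c.IsGallaiPartition S p) (hx : x ∈ S.image p) : p x = x := by
  obtain ⟨y, hy, rfl⟩ := Finset.mem_image.1 hx
  exact hp.idem y hy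

theorem image_subset (hp : c.IsGallaiPartition S p) : S.image p ⊆ S :=
  Finset.image_subset_iff.2 hp.mapsTo

theorem color_mergeParts (hp : c.IsGallaiPartition S p) (hx : x ∈ S) (hy : y ∈ S)
    (hreach : (c.graphOn i (S.image p)).Reachable v (p x))
    (hnot : ¬ (c.graphOn i (S.image p)).Reachable v (p y)) :
    c.color x y = c.color v (p y) := by
  rw [hp.color_eq x hx y hy fun heq => hnot (heq ▸ hreach), c.symm, c.symm v,
    color_eq_of_reachable (Finset.mem_image_of_mem p hy) hreach hnot]

theorem mergeParts_isGallaiPartition (hp : c.IsGallaiPartition S p) (hv : v ∈ S.image p)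
    (hi : ¬ c.ConnectedOn i (S.image p)) : c.IsGallaiPartition S (c.mergeParts i S p v) := by
  obtain ⟨z, hz, hvz⟩ : ∃ z ∈ S.image p, ¬ (c.graphOn i (S.image p)).Reachable v z := by
    by_contra! hall
    exact hi fun x hx y hy => (hall x hx).symm.trans (hall y hy)
  have hpos {x : V} (h : (c.graphOn i (S.image p)).Reachable v (p x)) :
      c.mergeParts i S p v x = v := if_pos h
  have hneg {x : V} (h : ¬ (c.graphOn i (S.image p)).Reachable v (p x)) :
      c.mergeParts i S p v x = p x := if_neg h
  have hself : c.mergeParts i S p v v = v := hpos (by rw [hp.map_eq_self hv])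
  refine ⟨fun x hx => ?_, fun x hx => ?_, fun x hx y hy hxy => ?_, ?_⟩
  · by_cases h : (c.graphOn i (S.image p)).Reachable v (p x)
    · exact (hpos h).symm ▸ hp.image_subset hv
    · exact (hneg h).symm ▸ hp.mapsTo x hx
  · by_cases h : (c.graphOn i (S.image p)).Reachable v (p x)
    · rw [hpos h, hself]
    · rw [hneg h, hneg (by rwa [hp.idem x hx]), hp.idem x hx]
  · by_cases h : (c.graphOn i (S.image p)).Reachable v (p x) <;>
      by_cases h' : (c.graphOn i (S.image p)).Reachable v (p y)
    · exact absurd ((hpos h).trans (hpos h').symm) hxy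
    · rw [hpos h, hneg h', hp.color_mergeParts hx hy h h']
    · rw [hneg h, hpos h', c.symm, c.symm (p x), hp.color_mergeParts hy hx h' h]
    · rw [hneg h, hneg h'] at hxy ⊢
      exact hp.color_eq x hx y hy hxy
  · refine Finset.one_lt_card.2 ⟨v, Finset.mem_image.2 ⟨v, hp.image_subset hv, hself⟩, z,
      Finset.mem_image.2 ⟨z, hp.image_subset hz, ?_⟩, fun h => hvz (h ▸ .rfl)⟩
    rw [hneg (by rwa [hp.map_eq_self hz]), hp.map_eq_self hz]

theorem card_image_mergeParts_lt (hv : v ∈ S.image p) (hw : w ∈ S.image p)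
    (hvw : (c.graph i).Adj v w) : (S.image (c.mergeParts i S p v)).card < (S.image p).card := by
  have hreach : (c.graphOn i (S.image p)).Reachable v w := Adj.reachable ⟨hvw, hv, hw⟩
  refine Finset.card_lt_card ((Finset.ssubset_iff_of_subset ?_).2 ⟨w, hw, fun hmem => ?_⟩)
  · refine Finset.image_subset_iff.2 fun x hx => ?_
    rw [mergeParts]
    split_ifs
    exacts [hv, Finset.mem_image_of_mem p hx]
  · obtain ⟨x, -, hx⟩ := Finset.mem_image.1 hmem
    rw [mergeParts] at hx
    split_ifs at hx with h
    · exact hvw.ne hx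
    · exact h (hx ▸ hreach)

end IsGallaiPartition

/-- A Gallai partition whose parts are joined in exactly the two colours `i` and `j`, both of which
connect the parts. -/
structure IsTwoColorPartition (c : GallaiColoring V K) (i j : K) (S : Finset V) (p : V → V) : Prop
    extends c.IsGallaiPartition S p where
  ne : i ≠ j
  color_or : ∀ x ∈ S.image p, ∀ y ∈ S.image p, x ≠ y → c.color x y = i ∨ c.color x y = j
  connected_left : c.ConnectedOn i (S.image p)
  connected_right : c.ConnectedOn j (S.image p)

theorem exists_isGallaiPartition_connectedOn (hS : 1 < S.card) :
    ∃ p, c.IsGallaiPartition S p ∧ ∀ i, ∀ x ∈ S.image p, ∀ y ∈ S.image p, (c.graph i).Adj x y →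
      c.ConnectedOn i (S.image p) := by
  obtain ⟨p, hp, hmin⟩ := exists_minimalFor_of_wellFoundedLT (c.IsGallaiPartition S)
    (fun p => (S.image p).card) ⟨id, isGallaiPartition_id hS⟩
  refine ⟨p, hp, fun i x hx y hy hxy => by_contra fun hi => ?_⟩
  have hlt := IsGallaiPartition.card_image_mergeParts_lt hx hy hxy
  exact hlt.not_ge (hmin (hp.mergeParts_isGallaiPartition hx hi) hlt.le)

theorem exists_isCompleteBetween_of_monochromatic (hp : c.IsGallaiPartition S p)
    (hmono : ∀ x ∈ S.image p, ∀ y ∈ S.image p, x ≠ y → c.color x y = i) :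
    ∃ A B : Finset V, A.Nonempty ∧ B.Nonempty ∧ Disjoint A B ∧ A ∪ B = S ∧
      (c.graph i).IsCompleteBetween A B := by
  obtain ⟨x, hx, y, hy, hxy⟩ := Finset.one_lt_card.1 hp.one_lt_card
  refine ⟨S.filter (p · = x), S.filter (¬ p · = x),
    ⟨x, Finset.mem_filter.2 ⟨hp.image_subset hx, hp.map_eq_self hx⟩⟩,
    ⟨y, Finset.mem_filter.2 ⟨hp.image_subset hy, ?_⟩⟩,
    Finset.disjoint_filter_filter_not .., Finset.filter_union_filter_not_eq .., ?_⟩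
  · exact fun h => hxy (h.symm.trans (hp.map_eq_self hy))
  · intro u hu w hw
    simp only [Finset.coe_filter, Set.mem_ofPred_eq] at hu hw
    have hne : p u ≠ p w := fun h => hw.2 (h ▸ hu.2)
    refine graph_adj.2 ⟨fun h => hne (h ▸ rfl), ?_⟩
    rw [hp.color_eq u hu.1 w hw.1 hne]
    exact hmono _ (Finset.mem_image_of_mem p hu.1) _ (Finset.mem_image_of_mem p hw.1) hne

/-- Gallai's structure theorem for rainbow-triangle-free colourings. -/
theorem exists_isCompleteBetween_or_isTwoColorPartition (c : GallaiColoring V K) (hS : 1 < S.card) :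
    (∃ (i : K) (A B : Finset V), A.Nonempty ∧ B.Nonempty ∧ Disjoint A B ∧ A ∪ B = S ∧
      (c.graph i).IsCompleteBetween A B) ∨ ∃ i j p, c.IsTwoColorPartition i j S p := by
  obtain ⟨p, hp, hconn⟩ := exists_isGallaiPartition_connectedOn (c := c) hS
  obtain ⟨x, hx, y, hy, hxy⟩ := Finset.one_lt_card.1 hp.one_lt_card
  by_cases hmono : ∀ u ∈ S.image p, ∀ w ∈ S.image p, u ≠ w → c.color u w = c.color x y
  · exact .inl ⟨_, exists_isCompleteBetween_of_monochromatic hp hmono⟩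
  push Not at hmono
  obtain ⟨x', hx', y', hy', hxy', hcolor⟩ := hmono
  have hi := hconn _ x hx y hy ⟨hxy, rfl⟩
  have hj := hconn _ x' hx' y' hy' ⟨hxy', rfl⟩
  refine .inr ⟨_, _, p, hp, hcolor.symm, fun u hu w hw huw => ?_, hi, hj⟩
  by_contra! hthird
  exact not_connectedOn_three hp.one_lt_card hcolor.symm hthird.1.symm hthird.2.symm
    ⟨hi, hj, hconn _ u hu w hw ⟨huw, rfl⟩⟩

end GallaiColoring

/-! ### Parts of a Gallai partition -/

namespace GallaiColoring

variable {V K : Type*} {c : GallaiColoring V K} {S : Finset V} {i j l : K}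
  {d : V} {p : V → V} {m n g : ℕ}

/-- The part of `S` that is represented by `d`. -/
noncomputable def part (S : Finset V) (p : V → V) (d : V) : Finset V :=
  S.filter (p · = d)

/-- The union of the parts that are joined to the part of `d` in colour `l`. -/
noncomputable def partNbrs (c : GallaiColoring V K) (l : K) (S : Finset V) (p : V → V) (d : V) :
    Finset V :=
  S.filter fun x => (c.graph l).Adj d (p x)

theorem part_subset : part S p d ⊆ S :=
  Finset.filter_subset _ _

theorem partNbrs_subset : c.partNbrs l S p d ⊆ S :=
  Finset.filter_subset _ _

namespace IsGallaiPartition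

theorem isCompleteBetween_part_partNbrs (hp : c.IsGallaiPartition S p) :
    (c.graph l).IsCompleteBetween (part S p d) (c.partNbrs l S p d) := by
  intro x hx y hy
  simp only [part, partNbrs, Finset.coe_filter, Set.mem_ofPred_eq] at hx hy
  obtain ⟨hxS, rfl⟩ := hx
  obtain ⟨hyS, hne, hcolor⟩ := hy
  exact graph_adj.2 ⟨fun h => hne (h ▸ rfl), (hp.color_eq x hxS y hyS hne).trans hcolor⟩

theorem part_nonempty (hp : c.IsGallaiPartition S p) (hd : d ∈ S.image p) :
    (part S p d).Nonempty :=
  ⟨d, Finset.mem_filter.2 ⟨hp.image_subset hd, hp.map_eq_self hd⟩⟩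

theorem nbrsIn_image_subset (hp : c.IsGallaiPartition S p) :
    nbrsIn (c.graph l) (S.image p) d ⊆ c.partNbrs l S p d := by
  intro x hx
  rw [mem_nbrsIn] at hx
  exact Finset.mem_filter.2 ⟨hp.image_subset hx.1, (hp.map_eq_self hx.1).symm ▸ hx.2⟩

end IsGallaiPartition

theorem two_mul_card_le (hg : 2 ≤ g) (hpart : ∀ d ∈ S.image p, (part S p d).card ≤ g) :
    2 * S.card ≤
      g * ((S.image p).card + ((S.image p).filter fun d => 2 ≤ (part S p d).card).card) := by
  rw [Finset.card_eq_sum_card_image p S, Finset.mul_sum, Finset.card_filter,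
    Finset.card_eq_sum_ones, ← Finset.sum_add_distrib, Finset.mul_sum]
  refine Finset.sum_le_sum fun d hd => ?_
  have hle := hpart d hd
  rw [part] at hle ⊢
  split_ifs <;> omega

namespace IsTwoColorPartition

theorem swap (hp : c.IsTwoColorPartition i j S p) : c.IsTwoColorPartition j i S p :=
  ⟨hp.toIsGallaiPartition, hp.ne.symm, fun x hx y hy hxy => (hp.color_or x hx y hy hxy).symm,
    hp.connected_right, hp.connected_left⟩

theorem adj_or_adj (hp : c.IsTwoColorPartition i j S p) {x y : V} (hx : x ∈ S.image p)
    (hy : y ∈ S.image p) (hxy : x ≠ y) : (c.graph i).Adj x y ∨ (c.graph j).Adj x y :=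
  (hp.color_or x hx y hy hxy).imp (⟨hxy, ·⟩) (⟨hxy, ·⟩)

theorem exists_adj (hp : c.IsTwoColorPartition i j S p) (hd : d ∈ S.image p) :
    ∃ w ∈ S.image p, (c.graph i).Adj d w := by
  obtain ⟨x, hx, hxd⟩ := Finset.exists_mem_ne hp.one_lt_card d
  exact hp.connected_left.exists_adj hd hx hxd

theorem partNbrs_nonempty (hp : c.IsTwoColorPartition i j S p) (hd : d ∈ S.image p) :
    (c.partNbrs i S p d).Nonempty := by
  obtain ⟨w, hw, hdw⟩ := hp.exists_adj hd
  exact ⟨w, hp.nbrsIn_image_subset (mem_nbrsIn.2 ⟨hw, hdw⟩)⟩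

theorem card_eq (hp : c.IsTwoColorPartition i j S p) (hd : d ∈ S.image p) :
    S.card = (part S p d).card + (c.partNbrs i S p d).card + (c.partNbrs j S p d).card := by
  have hunion : S = part S p d ∪ c.partNbrs i S p d ∪ c.partNbrs j S p d := by
    rw [part, partNbrs, partNbrs, ← Finset.filter_or, ← Finset.filter_or, eq_comm,
      Finset.filter_eq_self]
    intro x hx
    by_cases hxd : p x = d
    · exact .inl (.inl hxd)
    · exact (hp.adj_or_adj hd (Finset.mem_image_of_mem p hx) (Ne.symm hxd)).imp_left .inr
  conv_lhs => rw [hunion]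
  rw [Finset.card_union_of_disjoint, Finset.card_union_of_disjoint] <;>
    simp only [part, partNbrs, Finset.disjoint_left, Finset.mem_union, Finset.mem_filter]
  · exact fun x hx hx' => hx'.2.ne hx.2.symm
  · rintro x (hx | hx) hx'
    · exact hx'.2.ne hx.2.symm
    · exact hp.ne (hx.2.2.symm.trans hx'.2.2)

theorem part_ssubset (hp : c.IsTwoColorPartition i j S p) (hd : d ∈ S.image p) :
    part S p d ⊂ S := by
  refine Finset.ssubset_iff_subset_ne.2 ⟨part_subset, fun h => ?_⟩
  have hcard := hp.card_eq hd
  have hpos := (hp.partNbrs_nonempty hd).card_pos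
  rw [h] at hcard
  omega

theorem partNbrs_ssubset (hp : c.IsTwoColorPartition i j S p) (hd : d ∈ S.image p) :
    c.partNbrs i S p d ⊂ S := by
  refine Finset.ssubset_iff_subset_ne.2 ⟨partNbrs_subset, fun h => ?_⟩
  have hcard := hp.card_eq hd
  have hpos := (hp.part_nonempty hd).card_pos
  rw [h] at hcard
  omega

theorem not_bookFreeOn_one_one (hp : c.IsTwoColorPartition i j S p) :
    ¬ BookFreeOn (c.graph i) 1 1 S := by
  intro hfree
  have hunique {x y w : V} (hx : x ∈ S.image p) (hy : y ∈ S.image p) (hw : w ∈ S.image p)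
      (hxy : (c.graph i).Adj x y) (hxw : (c.graph i).Adj x w) : y = w :=
    Finset.card_le_one.1 (BookFreeOn.zero_iff.1 (BookFreeOn.succ_iff.1 hfree x
      (hp.image_subset hx))) y (mem_nbrsIn.2 ⟨hp.image_subset hy, hxy⟩) w
      (mem_nbrsIn.2 ⟨hp.image_subset hw, hxw⟩)
  obtain ⟨x, hx, -⟩ := Finset.one_lt_card.1 hp.one_lt_card
  obtain ⟨y, hy, hxy⟩ := hp.exists_adj hx
  obtain ⟨z, hz, hxz⟩ := hp.swap.exists_adj hx
  have hzy : z ≠ y := fun h => hp.ne (hxy.2.symm.trans (h ▸ hxz.2))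
  obtain ⟨u, hu, w, hw, hwX, huw⟩ := hp.connected_left.exists_crossing_edge (X := {x, y}) hx
    (.inl rfl) hz fun h => h.elim hxz.ne.symm hzy
  obtain rfl | rfl := hu
  · exact hwX (.inr (hunique hx hy hw hxy huw).symm)
  · exact hwX (.inl (hunique hy hx hw hxy.symm huw).symm)

theorem bookFreeOn_compl_of_subset (hp : c.IsTwoColorPartition i j S p) {t : ℕ} {X : Finset V}
    (hX : X ⊆ S.image p) (hfree : BookFreeOn (c.graph j) m t X) :
    BookFreeOn (c.graph i)ᶜ m t X :=
  hfree.anti fun _ ha _ hb hab =>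
    (hp.adj_or_adj (hX ha) (hX hb) hab.ne).resolve_left ((compl_adj ..).1 hab).2

theorem isBlowupSet (hp : c.IsTwoColorPartition i j S p)
    (hi : BookFreeOn (c.graph i) (m + 1) 1 S) (hj : BookFreeOn (c.graph j) (n + 1) 1 S) :
    IsBlowupSet (c.graph i) m n (S.image p)
      ((S.image p).filter fun d => 2 ≤ (part S p d).card) := by
  have hfree {l : K} {q : ℕ} (hl : BookFreeOn (c.graph l) (q + 1) 1 S) {d : V}
      (hd : 2 ≤ (part S p d).card) : BookFreeOn (c.graph l) q 0 (c.partNbrs l S p d) :=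
    BookFreeOn.right_of_not_left (n := 0) (by rwa [zero_add]) part_subset partNbrs_subset
      hp.isCompleteBetween_part_partNbrs fun h => absurd (BookFreeOn.zero_iff.1 h) (by omega)
  refine ⟨Finset.filter_subset _ _, fun d hd => ?_, fun d hd => ?_⟩ <;>
    rw [Finset.mem_filter] at hd
  · exact (hfree hi hd.2).subset hp.nbrsIn_image_subset
  · refine hp.bookFreeOn_compl_of_subset nbrsIn_subset ((hfree hj hd.2).subset fun x hx => ?_)
    rw [mem_nbrsIn, compl_adj] at hx
    exact hp.nbrsIn_image_subset
      (mem_nbrsIn.2 ⟨hx.1, (hp.adj_or_adj hd.1 hx.1 hx.2.1).resolve_left hx.2.2⟩)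

end IsTwoColorPartition

end GallaiColoring

/-! ### Upper bound -/

namespace GallaiColoring

section Levels

variable {V K : Type*} {c : GallaiColoring V K} {S A B : Finset V} {i j : K} {σ : K → ℕ} {a b : ℕ}

/-- The assignment `σ` of levels to the colours is valid on `S`: a colour of level `1`, `2` or `3`
contains in `S` no `P₃`, no `K₄` minus an edge or no `K₅` minus an edge, respectively. -/
def IsLevel (c : GallaiColoring V K) (S : Finset V) (σ : K → ℕ) : Prop :=
  ∀ l, σ l ∈ Set.Icc 1 3 ∧ BookFreeOn (c.graph l) (σ l) 1 S

theorem IsLevel.update (hσ : c.IsLevel S σ) (hA : A ⊆ S) (ha : a ∈ Set.Icc 1 3)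
    (hfree : BookFreeOn (c.graph i) a 1 A) : c.IsLevel A (Function.update σ i a) := by
  intro l
  by_cases hl : l = i
  · subst hl
    rw [Function.update_self]
    exact ⟨ha, hfree⟩
  · rw [Function.update_of_ne hl]
    exact ⟨(hσ l).1, (hσ l).2.subset hA⟩

theorem card_filter_update {U : Finset K} (hi : i ∈ U) :
    (U.filter (Function.update σ i a · = b)).card =
      ((U.erase i).filter (σ · = b)).card + if a = b then 1 else 0 := by
  have hcongr : (U.erase i).filter (Function.update σ i a · = b) =
      (U.erase i).filter (σ · = b) :=
    Finset.filter_congr fun l hl => by rw [Function.update_of_ne (Finset.ne_of_mem_erase hl)]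
  conv_lhs => rw [← Finset.insert_erase hi]
  rw [Finset.filter_insert, hcongr, Function.update_self]
  split_ifs
  · exact Finset.card_insert_of_notMem fun h => Finset.notMem_erase i U (Finset.mem_filter.1 h).1
  · rfl

variable [Fintype K]

/-- The bound on the order of a set on which the assignment `σ` of levels is valid. -/
noncomputable def levelBound (σ : K → ℕ) : ℕ :=
  gallaiBound (Finset.univ.filter (σ · = 3)).card (Finset.univ.filter (σ · = 2)).card

/-- Every valid assignment of levels bounds the order of `S`. -/
def LevelBounded (c : GallaiColoring V K) (S : Finset V) : Prop :=
  ∀ σ, c.IsLevel S σ → S.card ≤ levelBound σ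

theorem exists_levelBound_update (σ : K → ℕ) (i : K) :
    ∃ h t, ∀ a, levelBound (Function.update σ i a) =
      gallaiBound (h + if a = 3 then 1 else 0) (t + if a = 2 then 1 else 0) :=
  ⟨_, _, fun _ => congrArg₂ gallaiBound (card_filter_update (Finset.mem_univ i))
    (card_filter_update (Finset.mem_univ i))⟩

theorem IsLevel.card_le_of_isCompleteBetween (hσ : c.IsLevel S σ) (hA : A ⊆ S) (hB : B ⊆ S)
    (hneA : A.Nonempty) (hneB : B.Nonempty) (hAB : (c.graph i).IsCompleteBetween A B)
    (hbA : c.LevelBounded A) (hbB : c.LevelBounded B) : A.card + B.card ≤ levelBound σ := by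
  obtain ⟨h, t, hbound⟩ := exists_levelBound_update σ i
  have hcard {X : Finset V} {a : ℕ} (hX : X ⊆ S) (hbX : c.LevelBounded X) (ha : a ∈ Set.Icc 1 3)
      (hfree : BookFreeOn (c.graph i) a 1 X) :
      X.card ≤ gallaiBound (h + if a = 3 then 1 else 0) (t + if a = 2 then 1 else 0) :=
    hbound a ▸ hbX _ (hσ.update hX ha hfree)
  rw [← Function.update_eq_self i σ, hbound]
  obtain ⟨⟨hpos, hle⟩, hfree⟩ := hσ i
  generalize σ i = m at *
  obtain _ | m := m
  · omega
  have hfreeA := hfree.right_of_left_nonempty hB hA hAB.symm hneB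
  have hfreeB := hfree.right_of_left_nonempty hA hB hAB hneA
  obtain rfl | rfl | rfl : m = 0 ∨ m = 1 ∨ m = 2 := by omega
  · rw [BookFreeOn.zero_iff] at hfreeA hfreeB
    exact (Nat.add_le_add hfreeA hfreeB).trans (two_le_gallaiBound h t)
  · have hcardA : A.card ≤ gallaiBound h t := hcard hA hbA (by simp) hfreeA
    have hcardB : B.card ≤ gallaiBound h t := hcard hB hbB (by simp) hfreeB
    have hadd : 2 * gallaiBound h t ≤ gallaiBound h (t + 1) := two_mul_gallaiBound_le h t
    exact (Nat.add_le_add hcardA hcardB).trans ((two_mul _).symm.trans_le hadd)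
  · have hadd : gallaiBound h t + gallaiBound h (t + 1) ≤ gallaiBound (h + 1) t :=
      gallaiBound_add_le h t
    refine le_trans ?_ hadd
    obtain hone | hone := hfree.one_one_or_of_isCompleteBetween le_rfl hA hB hAB
    · exact Nat.add_le_add (hcard hA hbA (by simp) hone) (hcard hB hbB (by simp) hfreeB)
    · rw [add_comm]
      exact Nat.add_le_add (hcard hB hbB (by simp) hone) (hcard hA hbA (by simp) hfreeA)

/-- The bound given by `h` colours of level `3`, `t` colours of level `2`, one colour of level `a`
and one colour of level `b`. -/
def levelPairBound (h t a b : ℕ) : ℕ :=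
  gallaiBound (h + (if a = 3 then 1 else 0) + if b = 3 then 1 else 0)
    (t + (if a = 2 then 1 else 0) + if b = 2 then 1 else 0)

theorem exists_levelBound_update_update (σ : K → ℕ) (hij : i ≠ j) :
    ∃ h t, ∀ a b, levelBound (Function.update (Function.update σ i a) j b) =
      levelPairBound h t a b := by
  have hcard (a b x : ℕ) :
      (Finset.univ.filter (Function.update (Function.update σ i a) j b · = x)).card =
        (((Finset.univ.erase j).erase i).filter (σ · = x)).card + (if a = x then 1 else 0) +
          if b = x then 1 else 0 := by
    rw [card_filter_update (Finset.mem_univ j),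
      card_filter_update (Finset.mem_erase.2 ⟨hij, Finset.mem_univ i⟩)]
  exact ⟨_, _, fun a b => congrArg₂ gallaiBound (hcard a b 3) (hcard a b 2)⟩

theorem IsLevel.exists_levelPairBound (hσ : c.IsLevel S σ) (hij : i ≠ j)
    (hS : ∀ X ⊂ S, c.LevelBounded X) :
    ∃ h t, levelBound σ = levelPairBound h t (σ i) (σ j) ∧
      ∀ X ⊂ S, ∀ a ∈ Set.Icc 1 3, ∀ b ∈ Set.Icc 1 3, BookFreeOn (c.graph i) a 1 X →
        BookFreeOn (c.graph j) b 1 X → X.card ≤ levelPairBound h t a b := by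
  obtain ⟨h, t, hbound⟩ := exists_levelBound_update_update σ hij
  refine ⟨h, t, ?_, fun X hX a ha b hb hfree hfree' => ?_⟩
  · rw [← hbound, Function.update_eq_self, Function.update_eq_self]
  · exact hbound a b ▸ hS X hX _ ((hσ.update hX.subset ha hfree).update subset_rfl hb hfree')

end Levels

namespace IsTwoColorPartition

variable {V K : Type*} {c : GallaiColoring V K} {S : Finset V} {i j : K} {d : V}
  {p : V → V} {σ : K → ℕ}

theorem two_le_level (hp : c.IsTwoColorPartition i j S p) (hσ : c.IsLevel S σ) : 2 ≤ σ i := by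
  by_contra! hlt
  obtain ⟨⟨hpos, -⟩, hfree⟩ := hσ i
  rw [show σ i = 1 by omega] at hfree
  exact hp.not_bookFreeOn_one_one hfree

theorem bookFreeOn_part (hp : c.IsTwoColorPartition i j S p) (hd : d ∈ S.image p) {m t : ℕ}
    (hfree : BookFreeOn (c.graph i) (m + 1) t S) : BookFreeOn (c.graph i) m t (part S p d) :=
  hfree.right_of_left_nonempty partNbrs_subset part_subset
    hp.isCompleteBetween_part_partNbrs.symm (hp.partNbrs_nonempty hd)

theorem bookFreeOn_partNbrs (hp : c.IsTwoColorPartition i j S p) (hd : d ∈ S.image p) {m t : ℕ}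
    (hfree : BookFreeOn (c.graph i) (m + 1) t S) :
    BookFreeOn (c.graph i) m t (c.partNbrs i S p d) :=
  hfree.right_of_left_nonempty part_subset partNbrs_subset hp.isCompleteBetween_part_partNbrs
    (hp.part_nonempty hd)

theorem level_eq_three (hp : c.IsTwoColorPartition i j S p) (hσ : c.IsLevel S σ)
    (hd : d ∈ S.image p) (hnot : ¬ BookFreeOn (c.graph i) 1 1 (part S p d)) : σ i = 3 := by
  have htwo := hp.two_le_level hσ
  obtain ⟨⟨-, hle⟩, hfree⟩ := hσ i
  by_contra hne
  rw [show σ i = 2 by omega] at hfree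
  exact hnot (hp.bookFreeOn_part hd hfree)

variable [Fintype K]

theorem card_le_of_part (hp : c.IsTwoColorPartition i j S p) (hσ : c.IsLevel S σ)
    (hS : ∀ X ⊂ S, c.LevelBounded X) (hd : d ∈ S.image p)
    (hnot : ¬ BookFreeOn (c.graph i) 1 1 (part S p d)) : S.card ≤ levelBound σ := by
  obtain ⟨h, t, hbound, hcard⟩ := hσ.exists_levelPairBound hp.ne hS
  have hi := hp.level_eq_three hσ hd hnot
  have hfree := hi ▸ (hσ i).2
  have hpart : BookFreeOn (c.graph i) 2 1 (part S p d) := hp.bookFreeOn_part hd hfree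
  have hnbrs : BookFreeOn (c.graph i) 1 1 (c.partNbrs i S p d) :=
    (BookFreeOn.right_of_not_left (n := 1) (m := 1) hfree part_subset partNbrs_subset
      hp.isCompleteBetween_part_partNbrs hnot).mono zero_le_one
  have hcardC {b} := hcard _ (hp.part_ssubset hd) 2 (by simp) b
  have hcardI {b} := hcard _ (hp.partNbrs_ssubset hd) 1 (by simp) b
  have hcardJ {b} := hcard _ (hp.swap.partNbrs_ssubset hd) 3 (by simp) b
  rw [hbound, hp.card_eq hd, hi]
  obtain ⟨⟨-, hle⟩, hfree'⟩ := hσ j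
  obtain hj | hj : σ j = 2 ∨ σ j = 3 := by have := hp.swap.two_le_level hσ; omega
  · rw [hj] at hfree' ⊢
    have hC := hcardC (by simp) hpart (hp.swap.bookFreeOn_part hd hfree')
    have hI := hcardI (by simp) hnbrs (hfree'.subset partNbrs_subset)
    have hJ := hcardJ (by simp) (hfree.subset partNbrs_subset)
      (hp.swap.bookFreeOn_partNbrs hd hfree')
    have hsum : gallaiBound h (t + 1) + gallaiBound h (t + 1) + gallaiBound (h + 1) t ≤
        gallaiBound (h + 1) (t + 1) := by
      simpa only [two_mul] using two_mul_gallaiBound_add_le h t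
    exact (Nat.add_le_add (Nat.add_le_add hC hI) hJ).trans hsum
  rw [hj] at hfree' ⊢
  have hI := hcardI (by simp) hnbrs (hfree'.subset partNbrs_subset)
  obtain hone | hone := hfree'.one_one_or_of_isCompleteBetween le_rfl part_subset partNbrs_subset
    (hp.isCompleteBetween_part_partNbrs (d := d))
  · have hC := hcardC (by simp) hpart hone
    have hJ := hcardJ (by simp) (hfree.subset partNbrs_subset)
      (hp.swap.bookFreeOn_partNbrs hd hfree')
    exact (Nat.add_le_add (Nat.add_le_add hC hI) hJ).trans (gallaiBound_add_add_le h t)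
  · have hC := hcardC (by simp) hpart (hp.swap.bookFreeOn_part hd hfree')
    have hJ := hcardJ (by simp) (hfree.subset partNbrs_subset) hone
    have hsum : gallaiBound h (t + 2) + gallaiBound (h + 1) t + gallaiBound (h + 1) t ≤
        gallaiBound (h + 2) t := by
      simpa only [two_mul, add_assoc] using gallaiBound_add_two_mul_le h t
    exact (Nat.add_le_add (Nat.add_le_add hC hI) hJ).trans hsum

theorem card_le_of_forall_part (hp : c.IsTwoColorPartition i j S p) (hσ : c.IsLevel S σ)
    (hS : ∀ X ⊂ S, c.LevelBounded X) (hij : σ i ≤ σ j)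
    (hi : ∀ d ∈ S.image p, BookFreeOn (c.graph i) 1 1 (part S p d))
    (hj : ∀ d ∈ S.image p, BookFreeOn (c.graph j) 1 1 (part S p d)) :
    S.card ≤ levelBound σ := by
  obtain ⟨h, t, hbound, hcard⟩ := hσ.exists_levelPairBound hp.ne hS
  have hparts := two_mul_card_le (two_le_gallaiBound h t) fun d hd =>
    hcard _ (hp.part_ssubset hd) 1 (by simp) 1 (by simp) (hi d hd) (hj d hd)
  have htwo := hp.two_le_level hσ
  obtain ⟨⟨-, hle⟩, hfree⟩ := hσ i
  obtain ⟨⟨-, hle'⟩, hfree'⟩ := hσ j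
  have hT := hfree.subset hp.image_subset
  have hTc := hp.bookFreeOn_compl_of_subset subset_rfl (hfree'.subset hp.image_subset)
  rw [hbound]
  generalize σ i = a, σ j = b at *
  refine Nat.le_of_mul_le_mul_left (hparts.trans ?_) two_pos
  obtain ⟨rfl, rfl⟩ | ⟨rfl, rfl⟩ | ⟨rfl, rfl⟩ :
    a = 2 ∧ b = 2 ∨ a = 2 ∧ b = 3 ∨ a = 3 ∧ b = 3 := by omega
  · have hten := (hp.isBlowupSet hfree hfree').card_add_card_le_ten hT hTc
    have hfive : gallaiBound h (t + 2) = 5 * gallaiBound h t := gallaiBound_add_two_right h t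
    calc _ ≤ gallaiBound h t * 10 := Nat.mul_le_mul_left _ hten
      _ = 2 * gallaiBound h (t + 2) := by rw [hfive]; ring
  · have hseventeen := (hp.isBlowupSet hfree hfree').card_add_card_le_seventeen hT hTc
    calc _ ≤ gallaiBound h t * 17 := Nat.mul_le_mul_left _ hseventeen
      _ = 17 * gallaiBound h t := mul_comm ..
      _ ≤ 2 * gallaiBound (h + 1) (t + 1) := seventeen_mul_gallaiBound_le h t
  · have hthirtyFour := (hp.isBlowupSet hfree hfree').card_add_card_le_thirtyFour hT hTc
    calc _ ≤ gallaiBound h t * 34 := Nat.mul_le_mul_left _ hthirtyFour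
      _ = 2 * gallaiBound (h + 2) t := by rw [gallaiBound_add_two_left]; ring

theorem levelBounded (hp : c.IsTwoColorPartition i j S p) (hS : ∀ X ⊂ S, c.LevelBounded X) :
    c.LevelBounded S := by
  intro σ hσ
  by_cases hi : ∀ d ∈ S.image p, BookFreeOn (c.graph i) 1 1 (part S p d)
  · by_cases hj : ∀ d ∈ S.image p, BookFreeOn (c.graph j) 1 1 (part S p d)
    · obtain hle | hle := le_total (σ i) (σ j)
      · exact hp.card_le_of_forall_part hσ hS hle hi hj
      · exact hp.swap.card_le_of_forall_part hσ hS hle hj hi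
    · push Not at hj
      obtain ⟨d, hd, hnot⟩ := hj
      exact hp.swap.card_le_of_part hσ hS hd hnot
  · push Not at hi
    obtain ⟨d, hd, hnot⟩ := hi
    exact hp.card_le_of_part hσ hS hd hnot

end IsTwoColorPartition

variable {V K : Type*} [Fintype K] {c : GallaiColoring V K}

theorem levelBounded (S : Finset V) : c.LevelBounded S := by
  induction S using Finset.strongInduction with
  | H S ih =>
    intro σ hσ
    obtain hle | hlt := le_or_gt S.card 1
    · exact hle.trans (one_le_two.trans (two_le_gallaiBound _ _))
    obtain ⟨i, A, B, hA, hB, hdisj, rfl, hAB⟩ | ⟨i, j, p, hp⟩ :=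
      c.exists_isCompleteBetween_or_isTwoColorPartition hlt
    · rw [Finset.card_union_of_disjoint hdisj]
      exact hσ.card_le_of_isCompleteBetween Finset.subset_union_left Finset.subset_union_right
        hA hB hAB (ih A (left_lt_sup.2 fun h => hB.ne_empty (hdisj.eq_bot_of_ge h)))
        (ih B (right_lt_sup.2 fun h => hA.ne_empty (hdisj.eq_bot_of_le h)))
    · exact hp.levelBounded ih σ hσ

end GallaiColoring

section Upper

variable {V : Type*} {G : SimpleGraph V} {S : Finset V} {k m n r s : ℕ}

/-- The complete graph on `m + 2` vertices minus the edge between `0` and `1`. For `m = 1, 2, 3` it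
contains `P₃`, contains `K₃` and equals `H₃`, respectively. -/
def bookGraph (m : ℕ) : SimpleGraph (Fin (m + 2)) :=
  ⊤ \ fromRel fun a b => a = 0 ∧ b = 1

theorem bookGraph_isContained (h : ¬ BookFreeOn G m 1 S) : bookGraph m ⊑ G := by
  simp only [BookFreeOn, not_forall, not_le] at h
  obtain ⟨Q, -, hclique, hcard⟩ := h
  obtain ⟨x, hx, y, hy, hxy⟩ := Finset.one_lt_card.1 hcard
  replace hx := (Finset.mem_filter.1 hx).2
  replace hy := (Finset.mem_filter.1 hy).2
  let e := (Q.equivFinOfCardEq hclique.card_eq).symm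
  let f : Fin (m + 2) → V := Fin.cons x (Fin.cons y fun i => e i)
  have hxe (i) : G.Adj x (e i) := (hx _ (e i).2).symm
  have hye (i) : G.Adj y (e i) := (hy _ (e i).2).symm
  have hee (i j) (hij : ¬ i = j) : G.Adj (e i) (e j) :=
    hclique.isClique (e i).2 (e j).2 (Subtype.val_injective.ne (e.injective.ne hij))
  have hinj : Function.Injective f := by
    refine Fin.cons_injective_iff.2 ⟨?_, Fin.cons_injective_iff.2
      ⟨?_, Subtype.val_injective.comp e.injective⟩⟩
    · rw [Fin.range_cons]
      rintro (h | ⟨i, hi⟩)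
      · exact hxy h
      · exact (hxe i).ne hi.symm
    · rintro ⟨i, hi⟩
      exact (hye i).ne hi.symm
  have hadj : ∀ i j, (bookGraph m).Adj i j → G.Adj (f i) (f j) := by
    simpa [Fin.forall_fin_succ, bookGraph, f, hxe, hye, fun i => (hxe i).symm,
      fun i => (hye i).symm] using hee
  exact ⟨⟨⟨f, hadj _ _⟩, hinj⟩⟩

theorem GK3_isContained_bookGraph : GK3 ⊑ bookGraph 2 :=
  ⟨⟨⟨![0, 2, 3], by simp only [GK3, bookGraph, sdiff_adj, top_adj, fromRel_adj]; decide⟩,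
    by decide⟩⟩

theorem GP3_isContained_bookGraph : GP3 ⊑ bookGraph 1 :=
  ⟨⟨⟨![0, 2, 1], by simp only [GP3, bookGraph, sdiff_adj, top_adj, fromRel_adj]; decide⟩,
    by decide⟩⟩

/-- The level of the `i`-th colour in the problem with `r` colours for `H₃`, `s` colours for `K₃`
and `P₃` in all other colours. -/
def mixLevel (r s : ℕ) (i : Fin k) : ℕ :=
  if i < r then 3 else if i < r + s then 2 else 1

theorem mixPKH_isContained_bookGraph (i : Fin k) :
    (mixPKH k s r i).2 ⊑ bookGraph (mixLevel r s i) := by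
  rcases lt_or_ge (i : ℕ) r with hr | hr
  · rw [mixPKH, mixLevel, if_pos hr, if_pos hr]
    exact .refl GH3
  · rw [mixPKH, mixLevel, if_neg hr.not_gt, if_neg hr.not_gt]
    rcases lt_or_ge (i : ℕ) (r + s) with hs | hs
    · rw [if_pos hs, if_pos hs]
      exact GK3_isContained_bookGraph
    · rw [if_neg hs.not_gt, if_neg hs.not_gt]
      exact GP3_isContained_bookGraph

theorem card_filter_mixLevel_eq_three (h : r ≤ k) :
    (Finset.univ.filter fun i : Fin k => mixLevel r s i = 3).card = r := by
  have hiff (i : Fin k) : mixLevel r s i = 3 ↔ i < r := by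
    unfold mixLevel
    split_ifs <;> omega
  simp only [hiff]
  rw [Fin.card_filter_val_lt, min_eq_right h]

theorem card_filter_mixLevel_eq_two (h : r + s ≤ k) :
    (Finset.univ.filter fun i : Fin k => mixLevel r s i = 2).card = s := by
  have hsdiff : (Finset.univ.filter fun i : Fin k => mixLevel r s i = 2) =
      (Finset.univ.filter fun i : Fin k => i < r + s) \
        Finset.univ.filter fun i : Fin k => i < r := by
    ext i
    simp only [Finset.mem_filter_univ, Finset.mem_sdiff]
    unfold mixLevel
    split_ifs <;> omega
  rw [hsdiff, Finset.card_sdiff_of_subset fun i => by simpa using Nat.lt_add_right s,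
    Fin.card_filter_val_lt, Fin.card_filter_val_lt]
  omega

/-- The colouring of `K_n` given by a Gallai colouring in the sense of `IsGallaiColoring`. -/
def GallaiColoring.ofIsGallaiColoring {c : Fin n → Fin n → Fin k} (hc : IsGallaiColoring c) :
    GallaiColoring (Fin n) (Fin k) where
  color := c
  symm := hc.1
  not_rainbow u v w huv huw hvw := by
    by_contra! h
    exact hc.2 ⟨u, v, w, huv, huw, hvw, h⟩

theorem hasMonoCopy_iff_isContained {V : Type} {F : SimpleGraph V} {c : Fin n → Fin n → Fin k}
    (hc : IsGallaiColoring c) {i : Fin k} :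
    HasMonoCopy F c i ↔ F ⊑ (GallaiColoring.ofIsGallaiColoring hc).graph i := by
  constructor
  · rintro ⟨f, hf, hcolor⟩
    exact ⟨⟨⟨f, fun {a b} hab => ⟨hf.ne hab.ne, hcolor a b hab⟩⟩, hf⟩⟩
  · rintro ⟨f⟩
    exact ⟨f, f.injective, fun a b hab => (f.toHom.map_adj hab).2⟩

theorem le_gallaiBound_of_forall_not_hasMonoCopy (hrs : r + s ≤ k) {c : Fin n → Fin n → Fin k}
    (hc : IsGallaiColoring c) (h : ∀ i, ¬ HasMonoCopy (mixPKH k s r i).2 c i) :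
    n ≤ gallaiBound r s := by
  have hlevel : (GallaiColoring.ofIsGallaiColoring hc).IsLevel Finset.univ (mixLevel r s) := by
    refine fun i => ⟨?_, by_contra fun hbook => h i ((hasMonoCopy_iff_isContained hc).2
      ((mixPKH_isContained_bookGraph i).trans (bookGraph_isContained hbook)))⟩
    unfold mixLevel
    split_ifs <;> simp
  have hcard := GallaiColoring.levelBounded _ _ hlevel
  rwa [Finset.card_univ, Fintype.card_fin, GallaiColoring.levelBound,
    card_filter_mixLevel_eq_three (by omega), card_filter_mixLevel_eq_two hrs] at hcard

end Upper

/-! ### Paley graphs -/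

section Paley

/-- The graph on a ring in which two elements are adjacent if their difference, taken in one of the
two orders, is a square. For a finite field in which `-1` is a square it is the Paley graph. -/
def paleyGraph (R : Type*) [Ring R] : SimpleGraph R :=
  circulantGraph {x | IsSquare x}

instance {R : Type*} [Ring R] [DecidableEq R] [DecidablePred (IsSquare : R → Prop)] :
    DecidableRel (paleyGraph R).Adj :=
  inferInstanceAs (DecidableRel (circulantGraph _).Adj)

theorem cliqueFree_of_hom {V W : Type*} {G : SimpleGraph V} {H : SimpleGraph W} {n : ℕ}
    (f : G →g H) (h : H.CliqueFree n) : G.CliqueFree n := by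
  contrapose! h
  rw [not_cliqueFree_iff_top_isContained] at h ⊢
  obtain ⟨g⟩ := h
  exact ⟨⟨f.comp g.toHom, Hom.injective_of_top_hom _⟩⟩

theorem exists_hom_map_zero_of_not_cliqueFree {A : Type*} [AddGroup A] {s : Set A} {n : ℕ}
    [NeZero n] (h : ¬ (circulantGraph s).CliqueFree n) :
    ∃ f : completeGraph (Fin n) →g circulantGraph s, f 0 = 0 := by
  obtain ⟨f⟩ := (not_cliqueFree_iff_top_isContained n).1 h
  refine ⟨⟨fun i => f i + -f 0, fun {i j} hij => ?_⟩, add_neg_cancel _⟩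
  exact circulantGraph_adj_translate.2 (f.toHom.map_adj hij)

theorem paleyGraph_five_cliqueFree_three : (paleyGraph (ZMod 5)).CliqueFree 3 := by
  by_contra h
  obtain ⟨f, hf⟩ := exists_hom_map_zero_of_not_cliqueFree h
  have hadj (i j) (hij : i ≠ j) : (paleyGraph (ZMod 5)).Adj (f i) (f j) := f.map_adj hij
  have hnbrs : ∀ x, (paleyGraph (ZMod 5)).Adj 0 x → ∀ y, (paleyGraph (ZMod 5)).Adj 0 y →
      ¬ (paleyGraph (ZMod 5)).Adj x y := by
    decide +kernel
  exact hnbrs (f 1) (hf ▸ hadj 0 1 (by decide)) (f 2) (hf ▸ hadj 0 2 (by decide))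
    (hadj 1 2 (by decide))

theorem paleyGraph_seventeen_cliqueFree_four : (paleyGraph (ZMod 17)).CliqueFree 4 := by
  by_contra h
  obtain ⟨f, hf⟩ := exists_hom_map_zero_of_not_cliqueFree h
  have hadj (i j) (hij : i ≠ j) : (paleyGraph (ZMod 17)).Adj (f i) (f j) := f.map_adj hij
  have hnbrs : ∀ x, (paleyGraph (ZMod 17)).Adj 0 x → ∀ y, (paleyGraph (ZMod 17)).Adj 0 y →
      (paleyGraph (ZMod 17)).Adj x y → ∀ z, (paleyGraph (ZMod 17)).Adj 0 z →
      (paleyGraph (ZMod 17)).Adj x z → ¬ (paleyGraph (ZMod 17)).Adj y z := by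
    decide +kernel
  exact hnbrs (f 1) (hf ▸ hadj 0 1 (by decide)) (f 2) (hf ▸ hadj 0 2 (by decide))
    (hadj 1 2 (by decide)) (f 3) (hf ▸ hadj 0 3 (by decide)) (hadj 1 3 (by decide))
    (hadj 2 3 (by decide))

variable {F : Type*} [Field F] [Finite F]

theorem isSquare_mul_of_not_isSquare {a b : F} (ha : ¬ IsSquare a) (hb : ¬ IsSquare b) :
    IsSquare (a * b) := by
  have := Fintype.ofFinite F
  have hne {x : F} (hx : ¬ IsSquare x) : x ≠ 0 := fun h => hx (h ▸ IsSquare.zero)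
  rw [← quadraticChar_one_iff_isSquare (mul_ne_zero (hne ha) (hne hb)), map_mul,
    quadraticChar_neg_one_iff_not_isSquare.2 ha, quadraticChar_neg_one_iff_not_isSquare.2 hb]
  rfl

theorem compl_paleyGraph_cliqueFree (hF : ringChar F ≠ 2) {n : ℕ}
    (h : (paleyGraph F).CliqueFree n) : (paleyGraph F)ᶜ.CliqueFree n := by
  obtain ⟨a, ha⟩ := FiniteField.exists_nonsquare hF
  have ha0 : a ≠ 0 := fun h => ha (h ▸ IsSquare.zero)
  refine cliqueFree_of_hom ⟨fun x => a * x, fun {x y} hxy => ?_⟩ h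
  obtain ⟨hne, hnadj⟩ := (compl_adj _ _ _).1 hxy
  have hsq : ¬ IsSquare (x - y) := fun hsq => hnadj ⟨hne, .inl hsq⟩
  have hsq' : IsSquare (a * x - a * y) := mul_sub a x y ▸ isSquare_mul_of_not_isSquare ha hsq
  exact ⟨(mul_right_injective₀ ha0).ne hne, .inl hsq'⟩

end Paley

/-! ### Lower bound -/

namespace GallaiColoring

variable {V W : Type*} {f : ℕ → ℕ} {k n N q : ℕ}

/-- The colouring with colour `0` on the edges of `G` and colour `1` on all other pairs. -/
noncomputable def ofGraph (G : SimpleGraph V) : GallaiColoring V ℕ where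
  color u v := if G.Adj u v then 0 else 1
  symm u v := by simp only [G.adj_comm]
  not_rainbow u v w _ _ _ := by grind

theorem graph_zero_ofGraph (G : SimpleGraph V) : (ofGraph G).graph 0 = G := by
  ext u v
  simpa [graph_adj, ofGraph] using Adj.ne

theorem graph_one_ofGraph (G : SimpleGraph V) : (ofGraph G).graph 1 = Gᶜ := by
  ext u v
  simp [graph_adj, ofGraph]

/-- The restriction of a colouring of `W` along an injection `V → W`. -/
def comap (c : GallaiColoring W ℕ) (e : V ↪ W) : GallaiColoring V ℕ where
  color u v := c.color (e u) (e v)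
  symm _ _ := c.symm _ _
  not_rainbow _ _ _ huv huw hvw :=
    c.not_rainbow _ _ _ (e.injective.ne huv) (e.injective.ne huw) (e.injective.ne hvw)

/-- The colouring `d` with every vertex blown up into a copy of the colouring `c`. The colours of
`c` are shifted by `q` to keep them apart from those of `d`. -/
noncomputable def subst (q : ℕ) (d : GallaiColoring W ℕ) (c : GallaiColoring V ℕ) :
    GallaiColoring (W × V) ℕ where
  color u v := if u.1 = v.1 then q + c.color u.2 v.2 else d.color u.1 v.1
  symm u v := by simp only [eq_comm (a := u.1), c.symm u.2, d.symm u.1]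
  not_rainbow u v w huv huw hvw := by
    have hc := c.not_rainbow u.2 v.2 w.2
    have hd := d.not_rainbow u.1 v.1 w.1
    have := d.symm u.1 v.1
    rw [Ne, Prod.ext_iff] at huv huw hvw
    grind

/-- A colouring with the colours `0, …, N` in which the cliques of colour `l < N` have fewer than
`f l` vertices and the edges of colour `N` form a matching. -/
structure Avoids (c : GallaiColoring V ℕ) (f : ℕ → ℕ) (N : ℕ) : Prop where
  color_le : ∀ u v, c.color u v ≤ N
  cliqueFree : ∀ l < N, (c.graph l).CliqueFree (f l)
  matching : ∀ x, ((c.graph N).neighborSet x).Subsingleton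

theorem Avoids.comap {c : GallaiColoring W ℕ} (h : c.Avoids f N) (e : V ↪ W) :
    (c.comap e).Avoids f N where
  color_le _ _ := h.color_le _ _
  cliqueFree l hl :=
    let φ : (c.comap e).graph l →g c.graph l := ⟨e, fun h => ⟨e.injective.ne h.1, h.2⟩⟩
    cliqueFree_of_hom φ (h.cliqueFree l hl)
  matching x _ hy _ hz := e.injective
    (h.matching (e x) ⟨e.injective.ne hy.1, hy.2⟩ ⟨e.injective.ne hz.1, hz.2⟩)

theorem Avoids.subst {c : GallaiColoring V ℕ} (hc : c.Avoids (fun l => f (q + l)) N)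
    {d : GallaiColoring W ℕ} (hlt : ∀ u v, d.color u v < q)
    (hd : ∀ l < q, (d.graph l).CliqueFree (f l)) : (d.subst q c).Avoids f (q + N) := by
  have hnew {l u v} (h : ((d.subst q c).graph (q + l)).Adj u v) :
      u.1 = v.1 ∧ (c.graph l).Adj u.2 v.2 := by
    obtain ⟨hne, hcolor⟩ := h
    have := hlt u.1 v.1
    simp only [GallaiColoring.subst] at hcolor
    split_ifs at hcolor with h1
    · exact ⟨h1, fun h2 => hne (Prod.ext h1 h2), by omega⟩
    · omega
  have hold {l u v} (hl : l < q) (h : ((d.subst q c).graph l).Adj u v) :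
      (d.graph l).Adj u.1 v.1 := by
    have hcolor := h.2
    simp only [GallaiColoring.subst] at hcolor
    split_ifs at hcolor with h1
    · omega
    · exact ⟨h1, hcolor⟩
  refine ⟨fun u v => ?_, fun l hl => ?_, fun x y hy z hz => ?_⟩
  · have := hlt u.1 v.1
    have := hc.color_le u.2 v.2
    simp only [GallaiColoring.subst]
    split_ifs <;> omega
  · rcases lt_or_ge l q with hlq | hlq
    · exact cliqueFree_of_hom ⟨Prod.fst, hold hlq⟩ (hd l hlq)
    · obtain ⟨l, rfl⟩ := Nat.exists_eq_add_of_le hlq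
      exact cliqueFree_of_hom ⟨Prod.snd, fun h => (hnew h).2⟩ (hc.cliqueFree l (by omega))
  · exact Prod.ext ((hnew hy).1.symm.trans (hnew hz).1)
      (hc.matching x.2 (hnew hy).2 (hnew hz).2)

theorem Avoids.exists_mul {p : ℕ} [Fact p.Prime] (hp : p ≠ 2)
    (h0 : (paleyGraph (ZMod p)).CliqueFree (f 0)) (h1 : f 1 = f 0) {c : GallaiColoring (Fin n) ℕ}
    (hc : c.Avoids (fun l => f (2 + l)) N) :
    ∃ c' : GallaiColoring (Fin (p * n)) ℕ, c'.Avoids f (2 + N) := by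
  have hring : ringChar (ZMod p) ≠ 2 := by rwa [ZMod.ringChar_zmod_n]
  have hsubst : ((ofGraph (paleyGraph (ZMod p))).subst 2 c).Avoids f (2 + N) := by
    refine hc.subst (fun u v => ?_) fun l hl => ?_
    · simp only [ofGraph]
      split_ifs <;> omega
    · interval_cases l
      · rwa [graph_zero_ofGraph]
      · rw [graph_one_ofGraph, h1]
        exact compl_paleyGraph_cliqueFree hring h0
  have hcard : Nat.card (ZMod p × Fin n) = p * n := by
    rw [Nat.card_prod, Nat.card_zmod, Nat.card_fin]
  exact ⟨_, hsubst.comap (Finite.equivFinOfCardEq hcard).symm.toEmbedding⟩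

theorem avoids_ofGraph_cycleGraph_four : (ofGraph (cycleGraph 4)).Avoids (fun _ => 3) 1 where
  color_le u v := by
    simp only [ofGraph]
    split_ifs <;> omega
  cliqueFree l hl := by
    rw [Nat.lt_one_iff.1 hl, graph_zero_ofGraph]
    exact (cycleGraph.bicoloring_of_even 4 (by decide)).colorable.cliqueFree (by decide)
  matching := by
    have h : ∀ x y z : Fin 4, (cycleGraph 4)ᶜ.Adj x y → (cycleGraph 4)ᶜ.Adj x z → y = z := by
      decide
    rw [graph_one_ofGraph]
    exact fun x y hy z hz => h x y z hy hz

theorem exists_avoids_three (a : ℕ) :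
    ∃ c : GallaiColoring (Fin (5 ^ a * 4)) ℕ, c.Avoids (fun _ => 3) (2 * a + 1) := by
  induction a with
  | zero => exact ⟨_, avoids_ofGraph_cycleGraph_four⟩
  | succ a ih =>
    obtain ⟨c, hc⟩ := ih
    have : Fact (Nat.Prime 5) := ⟨Nat.prime_five⟩
    rw [pow_succ', mul_assoc, show 2 * (a + 1) + 1 = 2 + (2 * a + 1) by ring]
    exact hc.exists_mul (f := fun _ => 3) (by decide) paleyGraph_five_cliqueFree_three rfl

theorem exists_avoids_four_three (a m : ℕ) :
    ∃ c : GallaiColoring (Fin (17 ^ m * (5 ^ a * 4))) ℕ,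
      c.Avoids (fun l => if l < 2 * m then 4 else 3) (2 * m + (2 * a + 1)) := by
  induction m with
  | zero =>
    rw [pow_zero, one_mul]
    simpa only [mul_zero, Nat.not_lt_zero, if_false, zero_add] using exists_avoids_three a
  | succ m ih =>
    obtain ⟨c, hc⟩ := ih
    have : Fact (Nat.Prime 17) := ⟨by decide⟩
    rw [pow_succ', mul_assoc, show 2 * (m + 1) + (2 * a + 1) = 2 + (2 * m + (2 * a + 1)) by ring]
    have h0 : 0 < 2 * (m + 1) := by omega
    have h1 : 1 < 2 * (m + 1) := by omega
    have hshift (l : ℕ) : 2 + l < 2 * (m + 1) ↔ l < 2 * m := by omega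
    refine Avoids.exists_mul (by decide) ?_ ?_ (c := c) ?_
    · simpa only [h0, if_true] using paleyGraph_seventeen_cliqueFree_four
    · simp only [h0, h1]
    · simpa only [hshift] using hc

/-- The colours of a colouring by numbers less than `k`, as elements of `Fin k`. -/
def toFin (c : GallaiColoring V ℕ) (h : ∀ u v, c.color u v < k) (u v : V) : Fin k :=
  ⟨c.color u v, h u v⟩

theorem isGallaiColoring_toFin {c : GallaiColoring (Fin n) ℕ} (h : ∀ u v, c.color u v < k) :
    IsGallaiColoring (c.toFin h) := by
  refine ⟨fun u v => Fin.ext (c.symm u v), ?_⟩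
  rintro ⟨u, v, w, huv, huw, hvw, h1, h2, h3⟩
  simp only [toFin, Ne, Fin.mk.injEq] at h1 h2 h3
  exact (c.not_rainbow u v w huv huw hvw).elim h1 (·.elim h2 h3)

theorem isContained_of_hasMonoCopy_toFin {V : Type} {F : SimpleGraph V}
    {c : GallaiColoring (Fin n) ℕ} {h : ∀ u v, c.color u v < k} {i : Fin k}
    (hcopy : HasMonoCopy F (c.toFin h) i) : F ⊑ c.graph i := by
  obtain ⟨f, hf, hcolor⟩ := hcopy
  exact ⟨⟨⟨f, fun {a b} hab => ⟨hf.ne hab.ne, congrArg Fin.val (hcolor a b hab)⟩⟩, hf⟩⟩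

theorem completeGraph_isContained_GH3 : completeGraph (Fin 4) ⊑ GH3 :=
  ⟨⟨⟨![0, 2, 3, 4], by simp only [completeGraph, GH3, sdiff_adj, top_adj, fromRel_adj]; decide⟩,
    by decide⟩⟩

theorem Avoids.free_GP3 {c : GallaiColoring V ℕ} (hc : c.Avoids f N) {l : ℕ} (hl : N ≤ l) :
    GP3.Free (c.graph l) := by
  rintro ⟨g⟩
  have h10 : (c.graph l).Adj (g 1) (g 0) := g.toHom.map_adj (by simp [GP3])
  have h12 : (c.graph l).Adj (g 1) (g 2) := g.toHom.map_adj (by simp [GP3])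
  obtain rfl : N = l := hl.antisymm (h10.2 ▸ hc.color_le (g 1) (g 0))
  exact absurd (g.injective (hc.matching _ h10 h12)) (by decide)

theorem Avoids.free_mixPKH {c : GallaiColoring V ℕ} {r s : ℕ}
    (hc : c.Avoids (fun l => if l < r then 4 else 3) (r + s)) (i : Fin k) :
    (mixPKH k s r i).2.Free (c.graph i) := by
  rcases lt_or_ge (i : ℕ) r with hr | hr
  · rw [mixPKH, if_pos hr]
    have hfree := hc.cliqueFree i (by omega)
    rw [if_pos hr] at hfree
    exact fun hcopy => (completeGraph_isContained_GH3.trans hcopy).not_cliqueFree hfree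
  · rw [mixPKH, if_neg hr.not_gt]
    rcases lt_or_ge (i : ℕ) (r + s) with hs | hs
    · rw [if_pos hs]
      have hfree := hc.cliqueFree i hs
      rw [if_neg hr.not_gt] at hfree
      exact fun hcopy => IsContained.not_cliqueFree hcopy hfree
    · rw [if_neg hs.not_gt]
      exact hc.free_GP3 hs

end GallaiColoring

theorem exists_isGallaiColoring_forall_not_hasMonoCopy {k a m n : ℕ}
    (hk : 2 * m + (2 * a + 1) < k) (hn : n ≤ 17 ^ m * (5 ^ a * 4)) :
    ∃ c : Fin n → Fin n → Fin k, IsGallaiColoring c ∧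
      ∀ i, ¬ HasMonoCopy (mixPKH k (2 * a + 1) (2 * m) i).2 c i := by
  obtain ⟨c, hc⟩ := GallaiColoring.exists_avoids_four_three a m
  replace hc := hc.comap (Fin.castLEEmb hn)
  have hlt u v := (hc.color_le u v).trans_lt hk
  exact ⟨_, GallaiColoring.isGallaiColoring_toFin hlt, fun i hcopy =>
    hc.free_mixPKH i (GallaiColoring.isContained_of_hasMonoCopy_toFin hcopy)⟩

end

/-- Theorem 1.5, case (b₄): s odd, r even and s + r < k implies
GR_k((k-s-r)P₃, sK₃, rH₃) = 4·5^((s-1)/2)·17^(r/2) + 1. -/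
theorem GR_mixPKH_b4 (k s r : ℕ) (hk : 1 ≤ k) (hs : Odd s) (hr : Even r)
    (hsr : s + r < k) :
    GR k (mixPKH k s r) = 4 * 5 ^ ((s - 1) / 2) * 17 ^ (r / 2) + 1 := by
  obtain ⟨a, rfl⟩ := hs
  obtain ⟨m, rfl⟩ := hr.exists_two_nsmul
  simp only [smul_eq_mul] at hsr ⊢
  rw [Nat.add_sub_cancel, Nat.mul_div_cancel_left a two_pos, Nat.mul_div_cancel_left m two_pos]
  have hbound : gallaiBound (2 * m) (2 * a + 1) = 4 * 5 ^ a * 17 ^ m := by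
    rw [gallaiBound, if_pos (even_two_mul m), if_neg (Nat.not_even_two_mul_add_one a),
      Nat.mul_div_cancel_left m two_pos, Nat.mul_add_div two_pos]
    ring
  have hupper (c : Fin (4 * 5 ^ a * 17 ^ m + 1) → Fin (4 * 5 ^ a * 17 ^ m + 1) → Fin k)
      (hc : IsGallaiColoring c) : ∃ i, HasMonoCopy (mixPKH k (2 * a + 1) (2 * m) i).2 c i := by
    by_contra! h
    have hle := le_gallaiBound_of_forall_not_hasMonoCopy (by omega) hc h
    omega
  refine le_antisymm (Nat.sInf_le hupper) (le_csInf ⟨_, hupper⟩ fun n hn => ?_)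
  by_contra! hlt
  obtain ⟨c, hc, hfree⟩ := exists_isGallaiColoring_forall_not_hasMonoCopy (k := k) (a := a) (m := m)
    (n := n) (by omega) (by linarith)
  obtain ⟨i, hi⟩ := hn c hc
  exact hfree i hi
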